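/- arXiv:1402.4561 — 11 statements merged into one kernel-verified Lean document; each statement's English description precedes it below -/
import Mathlib

section
/- Let α ∈ (0,1) and λ, μ ∈ (1/2, 1). Then the double inequality C(λa+(1-λ)b, λb+(1-λ)a) < α·A(a,b) + (1-α)·T(a,b) < C(μa+(1-μ)b, μb+(1-μ)a) holds for all a, b > 0 with a ≠ b if and only if λ ≤ 1/2 + √(1-α)/4 and μ ≥ (1/2)·[1 + √((1-α)(4/π - 1))]. -/
/-!
Writing `a = A (1 + v)`, `b = A (1 - v)` with `A = (a + b) / 2` and `|v| < 1`, the contraharmonic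
mean with parameter `l` becomes `A (1 + (2 l - 1)² v²)`, so the double inequality says
`(2 lam - 1)² < (1 - α) g(v) < (2 μ - 1)²` where `g(v) = (T(1 + v, 1 - v) - 1) / v²`
(`double_ineq_iff`).

The integrand of `T(1 + v, 1 - v)` is `|1 + v e^{2iθ}| = |√(1 + v e^{2iθ})|²`, so Parseval's identity
gives `T(1 + v, 1 - v) = ∑ cₙ² v²ⁿ` with `cₙ` the binomial coefficients of exponent `1/2`
(`hasSum_toader`). Since `c₁ = 1/2`, `c₂ ≠ 0` and all the coefficients `cₙ²` are nonnegative, `g` is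
strictly increasing in `|v|`, with limits `1/4` at `v = 0` and, by continuity of the Toader mean,
`T(2, 0) - 1 = 4/π - 1` at `v = 1`. These bounds are strict (`toader_lower`, `toader_upper`), which
gives sufficiency; letting `v` tend to `0` and to `1` gives necessity.
-/

open Real

/-- The contraharmonic mean of two positive reals. -/
noncomputable def contraMean (a b : ℝ) : ℝ := (a ^ 2 + b ^ 2) / (a + b)

/-- The arithmetic mean of two reals. -/
noncomputable def arithMean (a b : ℝ) : ℝ := (a + b) / 2

/-- The Toader mean of two positive reals. -/
noncomputable def toaderMean (a b : ℝ) : ℝ :=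
  (2 / π) * ∫ θ in (0 : ℝ)..(π / 2), Real.sqrt (a ^ 2 * cos θ ^ 2 + b ^ 2 * sin θ ^ 2)

/-- The coefficients of the power series of `√(1 + z)` at `0`. -/
noncomputable def sqrtCoeff (n : ℕ) : ℝ := Ring.choose (1 / 2 : ℝ) n

lemma sqrtCoeff_zero : sqrtCoeff 0 = 1 := by simp [sqrtCoeff]

lemma sqrtCoeff_one : sqrtCoeff 1 = 1 / 2 := by simp [sqrtCoeff]

lemma sqrtCoeff_two : sqrtCoeff 2 = -1 / 8 := by
  rw [sqrtCoeff, Ring.choose_eq_smul]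
  simp [descPochhammer_succ_right, Polynomial.smeval_mul]
  norm_num

lemma hasSum_sqrtCoeff {z : ℂ} (hz : ‖z‖ < 1) :
    HasSum (fun n => (sqrtCoeff n : ℂ) * z ^ n) ((1 + z) ^ (1 / 2 : ℂ)) := by
  have h := (Complex.one_add_cpow_hasFPowerSeriesOnBall_zero (a := (1 / 2 : ℂ))).hasSum
    (y := z) (by rw [← ENNReal.ofReal_one, Metric.eball_ofReal]; simpa using hz)
  rw [zero_add] at h
  have e : (fun n => (sqrtCoeff n : ℂ) * z ^ n) =
      fun n => (binomialSeries ℂ (1 / 2 : ℂ) n) fun _ => z := by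
    ext n
    rw [binomialSeries_apply]
    simp [sqrtCoeff, Complex.ofReal_choose]
  rw [e]
  exact h

lemma summable_sqrtCoeff {v : ℝ} (hv : |v| < 1) :
    Summable (fun n => ‖sqrtCoeff n * v ^ n‖) := by
  have h := (hasSum_sqrtCoeff (z := (v : ℂ)) (by simpa using hv)).summable.norm
  refine h.congr fun n => ?_
  simp

lemma hasSum_normSq {f : ℕ → ℂ} {w : ℂ} (h : HasSum f w) :
    HasSum (fun p : ℕ × ℕ => (f p.1 * (starRingEnd ℂ) (f p.2)).re) (‖w‖ ^ 2) := by
  have hg : HasSum (fun n => (starRingEnd ℂ) (f n)) ((starRingEnd ℂ) w) :=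
    h.map (starRingEnd ℂ) Complex.continuous_conj
  have hs : Summable fun p : ℕ × ℕ => f p.1 * (starRingEnd ℂ) (f p.2) :=
    summable_mul_of_summable_norm (f := f) (g := fun n => (starRingEnd ℂ) (f n))
      h.summable.norm hg.summable.norm
  have hm : HasSum (fun p : ℕ × ℕ => f p.1 * (starRingEnd ℂ) (f p.2)) (w * (starRingEnd ℂ) w) :=
    HasSum.mul (f := f) (g := fun n => (starRingEnd ℂ) (f n)) h hg hs
  have h3 := Complex.hasSum_re hm
  rwa [Complex.mul_conj, Complex.ofReal_re, Complex.normSq_eq_norm_sq] at h3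

/-- The integrand of `T(1 + v, 1 - v)` is `|1 + v e^{2iθ}|`, the squared modulus of the series of
`√(1 + v e^{2iθ})`. -/
lemma hasSum_integrand {v : ℝ} (hv : |v| < 1) (θ : ℝ) :
    HasSum (fun p : ℕ × ℕ => sqrtCoeff p.1 * v ^ p.1 * (sqrtCoeff p.2 * v ^ p.2) *
        cos (2 * ((p.1 : ℝ) - p.2) * θ))
      (√((1 + v) ^ 2 * cos θ ^ 2 + (1 - v) ^ 2 * sin θ ^ 2)) := by
  have hnorm : ‖Complex.exp ((2 * θ : ℝ) * Complex.I)‖ = 1 := Complex.norm_exp_ofReal_mul_I _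
  set z : ℂ := v * Complex.exp ((2 * θ : ℝ) * Complex.I) with hzdef
  have hz : ‖z‖ < 1 := by rw [hzdef, norm_mul, hnorm]; simpa using hv
  have h1 := hasSum_sqrtCoeff hz
  have h4 := hasSum_normSq (f := fun n => (sqrtCoeff n : ℂ) * z ^ n) h1
  convert h4 using 1
  · ext ⟨n, m⟩
    have e : (sqrtCoeff n : ℂ) * z ^ n * ((starRingEnd ℂ) ((sqrtCoeff m : ℂ) * z ^ m)) =
        ((sqrtCoeff n * v ^ n * (sqrtCoeff m * v ^ m) : ℝ) : ℂ) *
          Complex.exp ((2 * ((n : ℝ) - m) * θ : ℝ) * Complex.I) := by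
      have e2 : Complex.exp ((2 * ((n : ℝ) - m) * θ : ℝ) * Complex.I) =
          Complex.exp ((2 * θ : ℝ) * Complex.I) ^ n *
            (starRingEnd ℂ) (Complex.exp ((2 * θ : ℝ) * Complex.I)) ^ m := by
        rw [← Complex.exp_conj, ← Complex.exp_nat_mul, ← Complex.exp_nat_mul, ← Complex.exp_add]
        congr 1
        simp only [map_mul, Complex.conj_ofReal, Complex.conj_I]
        push_cast
        ring
      rw [e2, hzdef]
      simp only [map_mul, map_pow, Complex.conj_ofReal]
      push_cast
      ring
    rw [e, Complex.re_ofReal_mul, Complex.exp_ofReal_mul_I_re]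
  · rw [← norm_pow]
    rw [← Complex.cpow_nat_mul]
    norm_num
    rw [Complex.norm_eq_sqrt_sq_add_sq, hzdef]
    congr 1
    simp only [Complex.add_re, Complex.add_im, Complex.re_ofReal_mul, Complex.im_ofReal_mul,
      Complex.exp_ofReal_mul_I_re, Complex.exp_ofReal_mul_I_im, Complex.one_re, Complex.one_im]
    rw [cos_two_mul, sin_two_mul]
    have := sin_sq_add_cos_sq θ
    have h5 : sin θ ^ 2 = 1 - cos θ ^ 2 := by linarith
    ring_nf
    rw [h5]
    ring

lemma integral_cos_diff {n m : ℕ} (h : n ≠ m) :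
    ∫ θ in (0 : ℝ)..(π / 2), cos (2 * ((n : ℝ) - m) * θ) = 0 := by
  have hne : 2 * ((n : ℝ) - m) ≠ 0 := by
    have : (n : ℝ) ≠ m := by exact_mod_cast h
    exact mul_ne_zero two_ne_zero (sub_ne_zero.2 this)
  rw [intervalIntegral.integral_comp_mul_left (fun x => cos x) hne, integral_cos]
  have : 2 * ((n : ℝ) - m) * (π / 2) = ((n - m : ℤ) : ℝ) * π := by push_cast; ring
  rw [this, sin_int_mul_pi]
  simp

/-- Parseval's identity for `√(1 + v e^{2iθ})`: only the diagonal terms of `hasSum_integrand`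
survive integration. -/
lemma hasSum_toader {v : ℝ} (hv : |v| < 1) :
    HasSum (fun n => sqrtCoeff n ^ 2 * (v ^ 2) ^ n) (toaderMean (1 + v) (1 - v)) := by
  have hs := summable_sqrtCoeff hv
  have hs2 : Summable fun p : ℕ × ℕ =>
      ‖sqrtCoeff p.1 * v ^ p.1 * (sqrtCoeff p.2 * v ^ p.2)‖ :=
    Summable.mul_norm (f := fun n => sqrtCoeff n * v ^ n) (g := fun n => sqrtCoeff n * v ^ n) hs hs
  have h := intervalIntegral.hasSum_integral_of_dominated_convergence
    (μ := MeasureTheory.volume) (a := 0) (b := π / 2)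
    (F := fun (p : ℕ × ℕ) θ => sqrtCoeff p.1 * v ^ p.1 * (sqrtCoeff p.2 * v ^ p.2) *
        cos (2 * ((p.1 : ℝ) - p.2) * θ))
    (f := fun θ => √((1 + v) ^ 2 * cos θ ^ 2 + (1 - v) ^ 2 * sin θ ^ 2))
    (fun p _ => ‖sqrtCoeff p.1 * v ^ p.1 * (sqrtCoeff p.2 * v ^ p.2)‖)
    (fun p => Continuous.aestronglyMeasurable (by fun_prop))
    (fun p => Filter.Eventually.of_forall fun θ _ => by
      rw [norm_mul]
      exact mul_le_of_le_one_right (norm_nonneg _) (abs_cos_le_one _))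
    (Filter.Eventually.of_forall fun θ _ => hs2)
    intervalIntegrable_const
    (Filter.Eventually.of_forall fun θ _ => hasSum_integrand hv θ)
  simp only [intervalIntegral.integral_const_mul] at h
  have hinj : Function.Injective (fun n : ℕ => (n, n)) := fun a b hab => by simpa using hab
  rw [← hinj.hasSum_iff] at h
  · have h' := h.mul_left (2 / π)
    rw [toaderMean]
    have e : (fun n => sqrtCoeff n ^ 2 * (v ^ 2) ^ n) = fun n => 2 / π * (sqrtCoeff n * v ^ n *
        (sqrtCoeff n * v ^ n) * ∫ θ in (0 : ℝ)..(π / 2), cos (2 * ((n : ℝ) - n) * θ)) := by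
      ext n
      simp
      field_simp
      ring
    rw [e]
    exact h'
  · rintro ⟨n, m⟩ hp
    have : n ≠ m := by rintro rfl; exact hp ⟨n, rfl⟩
    simp only [integral_cos_diff this, mul_zero]

lemma continuous_toader : Continuous fun v : ℝ => toaderMean (1 + v) (1 - v) := by
  unfold toaderMean
  refine continuous_const.mul ?_
  exact intervalIntegral.continuous_parametric_intervalIntegral_of_continuous' (by fun_prop) _ _

lemma toader_two_zero : toaderMean (1 + 1) (1 - 1) = 4 / π := by
  have h : ∫ θ in (0 : ℝ)..(π / 2), √((1 + 1) ^ 2 * cos θ ^ 2 + (1 - 1) ^ 2 * sin θ ^ 2) =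
      ∫ θ in (0 : ℝ)..(π / 2), 2 * cos θ := by
    refine intervalIntegral.integral_congr fun θ hθ => ?_
    rw [Set.uIcc_of_le (by positivity)] at hθ
    have hc : 0 ≤ cos θ := cos_nonneg_of_mem_Icc ⟨by linarith [hθ.1, pi_pos], hθ.2⟩
    have : ((1 : ℝ) + 1) ^ 2 * cos θ ^ 2 + (1 - 1) ^ 2 * sin θ ^ 2 = (2 * cos θ) ^ 2 := by ring
    simp only [this]
    exact sqrt_sq (by positivity)
  rw [toaderMean, h, intervalIntegral.integral_const_mul, integral_cos]
  simp
  ring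

lemma toader_smul {A : ℝ} (hA : 0 < A) (x y : ℝ) :
    toaderMean (A * x) (A * y) = A * toaderMean x y := by
  have h : ∀ θ, √((A * x) ^ 2 * cos θ ^ 2 + (A * y) ^ 2 * sin θ ^ 2) =
      A * √(x ^ 2 * cos θ ^ 2 + y ^ 2 * sin θ ^ 2) := fun θ => by
    rw [show (A * x) ^ 2 * cos θ ^ 2 + (A * y) ^ 2 * sin θ ^ 2 =
      A ^ 2 * (x ^ 2 * cos θ ^ 2 + y ^ 2 * sin θ ^ 2) by ring, sqrt_mul (by positivity),
      sqrt_sq hA.le]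
  simp only [toaderMean, h, intervalIntegral.integral_const_mul]
  ring

/-- The tail of the series of `T(1 + v, 1 - v)`, so that
`T(1 + v, 1 - v) = 1 + v² / 4 + v⁴ * toaderTail (v²)`. -/
noncomputable def toaderTail (x : ℝ) : ℝ := ∑' n, sqrtCoeff (n + 2) ^ 2 * x ^ n

lemma summable_tail {x : ℝ} (h0 : 0 ≤ x) (h1 : x < 1) :
    Summable fun n => sqrtCoeff (n + 2) ^ 2 * x ^ n := by
  rcases h0.eq_or_lt with rfl | hx
  · exact summable_of_ne_finset_zero (s := {0}) fun n hn => by simp_all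
  have hv : |√x| < 1 := by
    rw [abs_of_nonneg (sqrt_nonneg x)]
    rw [sqrt_lt' one_pos]
    linarith
  have h := ((summable_nat_add_iff 2).2 (hasSum_toader hv).summable).mul_right (x ^ 2)⁻¹
  refine h.congr fun n => ?_
  rw [sq_sqrt hx.le, pow_add]
  field_simp

lemma toader_eq_tail {v : ℝ} (hv : |v| < 1) :
    toaderMean (1 + v) (1 - v) = 1 + v ^ 2 / 4 + v ^ 4 * toaderTail (v ^ 2) := by
  have h := hasSum_toader hv
  rw [← h.tsum_eq, ← h.summable.sum_add_tsum_nat_add 2, toaderTail, ← tsum_mul_left]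
  simp only [Finset.sum_range_succ, Finset.sum_range_zero, sqrtCoeff_zero, sqrtCoeff_one]
  congr 1
  · ring
  · congr 1
    ext n
    ring

lemma toaderTail_pos {x : ℝ} (h0 : 0 ≤ x) (h1 : x < 1) : 0 < toaderTail x :=
  (summable_tail h0 h1).tsum_pos (fun n => by positivity) 0 (by norm_num [sqrtCoeff_two])

lemma toaderTail_mono {x y : ℝ} (h0 : 0 ≤ x) (hxy : x ≤ y) (h1 : y < 1) :
    toaderTail x ≤ toaderTail y :=
  (summable_tail h0 (hxy.trans_lt h1)).tsum_le_tsum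
    (fun n => by gcongr) (summable_tail (h0.trans hxy) h1)

lemma toader_lower {v : ℝ} (hv : |v| < 1) (h0 : v ≠ 0) :
    1 + v ^ 2 / 4 < toaderMean (1 + v) (1 - v) := by
  rw [toader_eq_tail hv]
  have := toaderTail_pos (sq_nonneg v) ((sq_lt_one_iff_abs_lt_one v).2 hv)
  have : 0 < v ^ 4 := by positivity
  nlinarith [mul_pos this ‹0 < toaderTail (v ^ 2)›]

/-- The quotient `(T(1 + v, 1 - v) - 1) / v² = 1/4 + v² * toaderTail (v²)` increases strictly to its
limit `4/π - 1` at `v = 1`. -/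
lemma toader_upper {v : ℝ} (hv : |v| < 1) (h0 : v ≠ 0) :
    toaderMean (1 + v) (1 - v) < 1 + (4 / π - 1) * v ^ 2 := by
  have hx1 : v ^ 2 < 1 := (sq_lt_one_iff_abs_lt_one v).2 hv
  have hx0 : 0 < v ^ 2 := by positivity
  have ht := toaderTail_pos hx0.le hx1
  -- monotonicity of the tail, passed to the limit `w → 1`
  have key : 1 / 4 + toaderTail (v ^ 2) ≤ 4 / π - 1 := by
    have hlim : Filter.Tendsto (fun w : ℝ => toaderMean (1 + w) (1 - w) - 1 - w ^ 2 / 4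
        - w ^ 4 * toaderTail (v ^ 2)) (nhdsWithin 1 (Set.Iio 1))
        (nhds (4 / π - 1 - 1 ^ 2 / 4 - 1 ^ 4 * toaderTail (v ^ 2))) := by
      rw [← toader_two_zero]
      refine Filter.Tendsto.mono_left (Continuous.tendsto ?_ _) nhdsWithin_le_nhds
      have := continuous_toader
      fun_prop
    have hge : 0 ≤ 4 / π - 1 - 1 ^ 2 / 4 - 1 ^ 4 * toaderTail (v ^ 2) := by
      refine ge_of_tendsto hlim ?_
      filter_upwards [Ioo_mem_nhdsLT hv] with w hw
      have hw0 : 0 ≤ w := (abs_nonneg v).trans hw.1.le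
      have hw1 : |w| < 1 := by rw [abs_of_nonneg hw0]; exact hw.2
      rw [toader_eq_tail hw1]
      have := toaderTail_mono (sq_nonneg v) (sq_le_sq.2 (hw.1.le.trans (le_abs_self w)))
        ((sq_lt_one_iff_abs_lt_one w).2 hw1)
      nlinarith [mul_le_mul_of_nonneg_left this (by positivity : 0 ≤ w ^ 4)]
    linarith
  rw [toader_eq_tail hv]
  have h1 : v ^ 2 * toaderTail (v ^ 2) < toaderTail (v ^ 2) := by nlinarith
  have h2 : v ^ 2 * (1 / 4 + v ^ 2 * toaderTail (v ^ 2)) < v ^ 2 * (4 / π - 1) :=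
    mul_lt_mul_of_pos_left (by linarith) hx0
  nlinarith

lemma contra_eq {A v l : ℝ} (hA : 0 < A) :
    contraMean (l * (A * (1 + v)) + (1 - l) * (A * (1 - v)))
      (l * (A * (1 - v)) + (1 - l) * (A * (1 + v))) = A * (1 + (2 * l - 1) ^ 2 * v ^ 2) := by
  rw [contraMean, div_eq_iff (by ring_nf; positivity)]
  ring

/-- The double inequality in the variable `v = (a - b) / (a + b)`, after division by `A(a, b)`. -/
lemma double_ineq_iff (α l m : ℝ) :
    (∀ a b : ℝ, 0 < a → 0 < b → a ≠ b →
      contraMean (l * a + (1 - l) * b) (l * b + (1 - l) * a)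
        < α * arithMean a b + (1 - α) * toaderMean a b ∧
      α * arithMean a b + (1 - α) * toaderMean a b
        < contraMean (m * a + (1 - m) * b) (m * b + (1 - m) * a)) ↔
    ∀ v : ℝ, |v| < 1 → v ≠ 0 →
      (2 * l - 1) ^ 2 * v ^ 2 < (1 - α) * (toaderMean (1 + v) (1 - v) - 1) ∧
      (1 - α) * (toaderMean (1 + v) (1 - v) - 1) < (2 * m - 1) ^ 2 * v ^ 2 := by
  have main : ∀ A v : ℝ, 0 < A →
      ((contraMean (l * (A * (1 + v)) + (1 - l) * (A * (1 - v)))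
          (l * (A * (1 - v)) + (1 - l) * (A * (1 + v)))
        < α * arithMean (A * (1 + v)) (A * (1 - v))
          + (1 - α) * toaderMean (A * (1 + v)) (A * (1 - v)) ∧
      α * arithMean (A * (1 + v)) (A * (1 - v)) + (1 - α) * toaderMean (A * (1 + v)) (A * (1 - v))
        < contraMean (m * (A * (1 + v)) + (1 - m) * (A * (1 - v)))
          (m * (A * (1 - v)) + (1 - m) * (A * (1 + v)))) ↔
      ((2 * l - 1) ^ 2 * v ^ 2 < (1 - α) * (toaderMean (1 + v) (1 - v) - 1) ∧
      (1 - α) * (toaderMean (1 + v) (1 - v) - 1) < (2 * m - 1) ^ 2 * v ^ 2)) := by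
    intro A v hA
    have e : α * arithMean (A * (1 + v)) (A * (1 - v))
        + (1 - α) * toaderMean (A * (1 + v)) (A * (1 - v))
        = A * (1 + (1 - α) * (toaderMean (1 + v) (1 - v) - 1)) := by
      rw [toader_smul hA, arithMean]
      ring
    rw [contra_eq hA, contra_eq hA, e, mul_lt_mul_iff_right₀ hA, mul_lt_mul_iff_right₀ hA,
      add_lt_add_iff_left, add_lt_add_iff_left]
  constructor
  · intro h v hv h0
    have hv' := abs_lt.1 hv
    refine (main 1 v one_pos).1 (h _ _ (by linarith) (by linarith) fun h => h0 (by linarith))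
  · intro h a b ha hb hab
    have hab' : 0 < a + b := by linarith
    have ea : a = (a + b) / 2 * (1 + (a - b) / (a + b)) := by field_simp; ring
    have eb : b = (a + b) / 2 * (1 - (a - b) / (a + b)) := by field_simp; ring
    have := (main ((a + b) / 2) ((a - b) / (a + b)) (by linarith)).2 (h _ ?_ ?_)
    · rwa [← ea, ← eb] at this
    · rw [abs_lt, lt_div_iff₀ hab', div_lt_iff₀ hab']
      constructor <;> linarith
    · exact div_ne_zero (sub_ne_zero.2 hab) hab'.ne'

theorem stmt0 (α lam μ : ℝ) (hα : α ∈ Set.Ioo (0 : ℝ) 1)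
    (hlam : lam ∈ Set.Ioo (1 / 2 : ℝ) 1) (hμ : μ ∈ Set.Ioo (1 / 2 : ℝ) 1) :
    (∀ a b : ℝ, 0 < a → 0 < b → a ≠ b →
      contraMean (lam * a + (1 - lam) * b) (lam * b + (1 - lam) * a)
        < α * arithMean a b + (1 - α) * toaderMean a b ∧
      α * arithMean a b + (1 - α) * toaderMean a b
        < contraMean (μ * a + (1 - μ) * b) (μ * b + (1 - μ) * a)) ↔
    (lam ≤ 1 / 2 + Real.sqrt (1 - α) / 4 ∧
      μ ≥ 1 / 2 * (1 + Real.sqrt ((1 - α) * (4 / π - 1)))) := by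
  have hα' : 0 < 1 - α := by linarith [hα.2]
  have hl : 0 < 2 * lam - 1 := by linarith [hlam.1]
  have hm : 0 < 2 * μ - 1 := by linarith [hμ.1]
  have el : lam ≤ 1 / 2 + √(1 - α) / 4 ↔ (2 * lam - 1) ^ 2 ≤ (1 - α) / 4 := by
    have h := le_sqrt' (x := 2 * (2 * lam - 1)) (y := 1 - α) (by positivity)
    constructor
    · intro h1
      have := h.1 (by linarith)
      linarith
    · intro h1
      have := h.2 (by linarith)
      linarith
  have em : μ ≥ 1 / 2 * (1 + √((1 - α) * (4 / π - 1))) ↔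
      (1 - α) * (4 / π - 1) ≤ (2 * μ - 1) ^ 2 := by
    have h := sqrt_le_left (x := (1 - α) * (4 / π - 1)) hm.le
    constructor
    · intro h1
      exact h.1 (by linarith)
    · intro h1
      have := h.2 h1
      linarith
  rw [double_ineq_iff, el, em]
  constructor
  · intro h
    constructor
    · -- dividing by `v²` and letting `v → 0`
      have hlim : Filter.Tendsto (fun v : ℝ => (1 - α) * (1 / 4 + v ^ 2 * toaderTail (1 / 4)))
          (nhdsWithin 0 (Set.Ioi 0))
          (nhds ((1 - α) * (1 / 4 + 0 ^ 2 * toaderTail (1 / 4)))) :=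
        Filter.Tendsto.mono_left (Continuous.tendsto (by fun_prop) _) nhdsWithin_le_nhds
      have hle : (2 * lam - 1) ^ 2 ≤ (1 - α) * (1 / 4 + 0 ^ 2 * toaderTail (1 / 4)) := by
        refine ge_of_tendsto hlim ?_
        filter_upwards [Ioo_mem_nhdsGT (by norm_num : (0 : ℝ) < 1 / 2)] with v hv
        have hv1 : |v| < 1 := by rw [abs_of_pos hv.1]; linarith [hv.2]
        have h1 := (h v hv1 hv.1.ne').1
        rw [toader_eq_tail hv1] at h1
        have hv2 : 0 < v ^ 2 := pow_pos hv.1 2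
        have h2 := toaderTail_mono (sq_nonneg v) (by nlinarith [hv.1, hv.2] : v ^ 2 ≤ 1 / 4)
          (by norm_num)
        have h3 : (2 * lam - 1) ^ 2 * v ^ 2 <
            (1 - α) * (1 / 4 + v ^ 2 * toaderTail (v ^ 2)) * v ^ 2 := by
          refine h1.trans_eq ?_
          ring
        refine (lt_of_mul_lt_mul_right h3 hv2.le).le.trans ?_
        gcongr
      linarith
    · -- letting `v → 1`
      have hc := continuous_toader
      have h1 : Filter.Tendsto (fun v : ℝ => (1 - α) * (toaderMean (1 + v) (1 - v) - 1))
          (nhdsWithin 1 (Set.Iio 1)) (nhds ((1 - α) * (4 / π - 1))) := by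
        rw [← toader_two_zero]
        exact Filter.Tendsto.mono_left (Continuous.tendsto (by fun_prop) _) nhdsWithin_le_nhds
      have h2 : Filter.Tendsto (fun v : ℝ => (2 * μ - 1) ^ 2 * v ^ 2)
          (nhdsWithin 1 (Set.Iio 1)) (nhds ((2 * μ - 1) ^ 2 * 1 ^ 2)) :=
        Filter.Tendsto.mono_left (Continuous.tendsto (by fun_prop) _) nhdsWithin_le_nhds
      have hle := le_of_tendsto_of_tendsto h1 h2 (by
        filter_upwards [Ioo_mem_nhdsLT (zero_lt_one (α := ℝ))] with v hv
        exact (h v (by rw [abs_of_pos hv.1]; exact hv.2) hv.1.ne').2.le)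
      linarith
  · rintro ⟨h1, h2⟩ v hv h0
    have hv2 : 0 < v ^ 2 := by positivity
    constructor
    · calc (2 * lam - 1) ^ 2 * v ^ 2 ≤ (1 - α) / 4 * v ^ 2 := by gcongr
        _ = (1 - α) * (v ^ 2 / 4) := by ring
        _ < _ := mul_lt_mul_of_pos_left (by linarith [toader_lower hv h0]) hα'
    · calc _ < (1 - α) * ((4 / π - 1) * v ^ 2) :=
            mul_lt_mul_of_pos_left (by linarith [toader_upper hv h0]) hα'
        _ = (1 - α) * (4 / π - 1) * v ^ 2 := by ring
        _ ≤ _ := by gcongr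
end

section
/- Let α ∈ (0,1) and λ ∈ (1/2, 1) with λ ≤ 1/2 + √(1-α)/4. Then for all a, b > 0 with a ≠ b, one has C(λa+(1-λ)b, λb+(1-λ)a) < α·A(a,b) + (1-α)·T(a,b). -/
/-!
Put `s = (a + b) / 2` and `d = (a - b) / 2`, so `|d| < s`. The contraharmonic mean on the left equals
`s + (2 * lam - 1) ^ 2 * d ^ 2 / s`, and the hypothesis on `lam` says `(2 * lam - 1) ^ 2 ≤ (1 - α) / 4`.
So everything follows from `s + d ^ 2 / (4 * s) < T(a, b)`.

For this bound, the integrand of the Toader mean at `θ` is `|Z|` with `Z = s + d * e` and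
`e = exp (2 * i * θ)`. Let `P = s + (d / 2) * e`, so that `s * Z = P ^ 2 - (d * e / 2) ^ 2`. Then
`s * |Z| ≥ Re (s * Z * conj P ^ 2) / |P| ^ 2 = Q - N / (4 * Q)`, where `Q = |P| ^ 2` and
`N = d ^ 2 * Re ((e * conj P) ^ 2)`. The mean of `Q` is `s ^ 2 + d ^ 2 / 4`. Moreover `N / Q` is the real
part of a function of `d * e` that is holomorphic on the closed disc of radius `|d|` and vanishes at `0`, so
its mean is `0`; an explicit antiderivative with an arctangent shows this. The inequality is strict where
`s * Z * conj P ^ 2` is not real, for instance at `θ = π / 4`.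
-/

open Real

/-- `|s + (d / 2) * exp (2 * i * θ)| ^ 2`. -/
noncomputable def toaderQ (s d θ : ℝ) : ℝ := s ^ 2 + s * d * cos (2 * θ) + d ^ 2 / 4

/-- `d ^ 2 * Re ((s * exp (2 * i * θ) + d / 2) ^ 2)`. -/
noncomputable def toaderN (s d θ : ℝ) : ℝ :=
  d ^ 2 * (s ^ 2 * (2 * cos (2 * θ) ^ 2 - 1) + s * d * cos (2 * θ) + d ^ 2 / 4)

lemma two_mul_add_mul_cos_pos {s d : ℝ} (hd : |d| < s) (x : ℝ) : 0 < 2 * s + d * cos x := by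
  have h1 : |d * cos x| ≤ |d| := by
    rw [abs_mul]
    exact mul_le_of_le_one_right (abs_nonneg d) (abs_cos_le_one x)
  have h2 := neg_abs_le (d * cos x)
  have h3 := abs_nonneg d
  linarith

lemma toaderQ_eq (s d θ : ℝ) :
    4 * toaderQ s d θ = (2 * s + d * cos (2 * θ)) ^ 2 + (d * sin (2 * θ)) ^ 2 := by
  have h := sin_sq_add_cos_sq (2 * θ)
  unfold toaderQ
  linear_combination (-d ^ 2) * h

lemma toaderQ_pos {s d : ℝ} (hd : |d| < s) (θ : ℝ) : 0 < toaderQ s d θ := by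
  have h1 := two_mul_add_mul_cos_pos hd (2 * θ)
  have h2 := toaderQ_eq s d θ
  nlinarith [sq_nonneg (d * sin (2 * θ)), pow_pos h1 2]

/-- The arctangent is the argument of `s + (d / 2) * exp (2 * i * θ)`; the antiderivative is the imaginary
part of the primitive of a holomorphic function along the circle of radius `|d|`. -/
lemma hasDerivAt_toader_antideriv {s d : ℝ} (hd : |d| < s) (θ : ℝ) :
    HasDerivAt (fun θ => (2 * s * d * sin (2 * θ)
        + (d ^ 2 - 4 * s ^ 2) * arctan (d * sin (2 * θ) / (2 * s + d * cos (2 * θ)))) / 2)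
      (toaderN s d θ / toaderQ s d θ) θ := by
  have hD := two_mul_add_mul_cos_pos hd (2 * θ)
  have hQ := toaderQ_pos hd θ
  have hQ4 := toaderQ_eq s d θ
  have h2 : HasDerivAt (fun θ : ℝ => 2 * θ) 2 θ := by
    simpa using (hasDerivAt_id θ).const_mul (2 : ℝ)
  have hs := h2.sin
  have hc := h2.cos
  have hq := (hs.const_mul d).div ((hc.const_mul d).const_add (2 * s)) hD.ne'
  have hmain := (((hs.const_mul (2 * s * d)).add (hq.arctan.const_mul (d ^ 2 - 4 * s ^ 2))).div_const 2)
  refine hmain.congr_deriv ?_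
  have hSC := sin_sq_add_cos_sq (2 * θ)
  have h1 : 1 + (d * sin (2 * θ) / (2 * s + d * cos (2 * θ))) ^ 2
      = 4 * toaderQ s d θ / (2 * s + d * cos (2 * θ)) ^ 2 := by
    rw [hQ4]; field_simp
  simp only [Pi.div_apply]
  rw [h1]
  have hQ' : toaderQ s d θ = s ^ 2 + s * d * cos (2 * θ) + d ^ 2 / 4 := rfl
  unfold toaderN
  generalize toaderQ s d θ = Q at *
  generalize sin (2 * θ) = S at *
  generalize cos (2 * θ) = C at *
  field_simp
  subst hQ'
  have hS : S ^ 2 = 1 - C ^ 2 := by linarith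
  ring_nf
  simp only [hS]
  ring

lemma integral_toaderN_div_toaderQ {s d : ℝ} (hd : |d| < s) :
    ∫ θ in (0 : ℝ)..(π / 2), toaderN s d θ / toaderQ s d θ = 0 := by
  have hcont : Continuous fun θ => toaderN s d θ / toaderQ s d θ := by
    refine Continuous.div ?_ ?_ fun θ => (toaderQ_pos hd θ).ne'
    · unfold toaderN; fun_prop
    · unfold toaderQ; fun_prop
  rw [intervalIntegral.integral_eq_sub_of_hasDerivAt
    (fun θ _ => hasDerivAt_toader_antideriv hd θ) (hcont.intervalIntegrable _ _)]
  have h : 2 * (π / 2) = π := by ring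
  simp [h]

lemma integral_toaderQ (s d : ℝ) :
    ∫ θ in (0 : ℝ)..(π / 2), toaderQ s d θ = (s ^ 2 + d ^ 2 / 4) * (π / 2) := by
  have hder : ∀ θ ∈ Set.uIcc (0 : ℝ) (π / 2), HasDerivAt
      (fun θ => (s ^ 2 + d ^ 2 / 4) * θ + s * d / 2 * sin (2 * θ)) (toaderQ s d θ) θ := by
    intro θ _
    have h2 : HasDerivAt (fun θ : ℝ => 2 * θ) 2 θ := by
      simpa using (hasDerivAt_id θ).const_mul (2 : ℝ)
    refine (((hasDerivAt_id θ).const_mul (s ^ 2 + d ^ 2 / 4)).add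
      (h2.sin.const_mul (s * d / 2))).congr_deriv ?_
    unfold toaderQ
    ring
  have hcont : Continuous (toaderQ s d) := by unfold toaderQ; fun_prop
  rw [intervalIntegral.integral_eq_sub_of_hasDerivAt hder (hcont.intervalIntegrable _ _)]
  have h : 2 * (π / 2) = π := by ring
  simp [h]

/-- `|W| ^ 2 = (Re W) ^ 2 + (Im W) ^ 2` for `W = s * Z * conj P ^ 2`. -/
lemma toader_norm_identity (s d θ : ℝ) :
    s ^ 2 * toaderQ s d θ ^ 2 * (s ^ 2 + d ^ 2 + 2 * s * d * cos (2 * θ))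
      = (toaderQ s d θ ^ 2 - toaderN s d θ / 4) ^ 2
        + (d ^ 2 / 2 * (s * cos (2 * θ) + d / 2) * (s * sin (2 * θ))) ^ 2 := by
  have hS : sin (2 * θ) ^ 2 = 1 - cos (2 * θ) ^ 2 := by
    linarith [sin_sq_add_cos_sq (2 * θ)]
  simp only [mul_pow, hS]
  unfold toaderN toaderQ
  ring

lemma toader_radicand (s d θ : ℝ) :
    (s + d) ^ 2 * cos θ ^ 2 + (s - d) ^ 2 * sin θ ^ 2
      = s ^ 2 + d ^ 2 + 2 * s * d * cos (2 * θ) := by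
  rw [cos_two_mul, sin_sq]
  ring

lemma toader_lower_le {s d : ℝ} (hd : |d| < s) (θ : ℝ) :
    (toaderQ s d θ - toaderN s d θ / toaderQ s d θ / 4) / s
      ≤ √((s + d) ^ 2 * cos θ ^ 2 + (s - d) ^ 2 * sin θ ^ 2) := by
  have hs : 0 < s := (abs_nonneg d).trans_lt hd
  have hQ := toaderQ_pos hd θ
  rw [toader_radicand]
  apply Real.le_sqrt_of_sq_le
  have hid := toader_norm_identity s d θ
  have h : (toaderQ s d θ - toaderN s d θ / toaderQ s d θ / 4) / s
      = (toaderQ s d θ ^ 2 - toaderN s d θ / 4) / (s * toaderQ s d θ) := by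
    field_simp
  rw [h, div_pow, div_le_iff₀ (by positivity)]
  nlinarith [sq_nonneg (d ^ 2 / 2 * (s * cos (2 * θ) + d / 2) * (s * sin (2 * θ)))]

lemma toader_lower_lt {s d : ℝ} (hd : |d| < s) (hd0 : d ≠ 0) :
    (toaderQ s d (π / 4) - toaderN s d (π / 4) / toaderQ s d (π / 4) / 4) / s
      < √((s + d) ^ 2 * cos (π / 4) ^ 2 + (s - d) ^ 2 * sin (π / 4) ^ 2) := by
  have hs : 0 < s := (abs_nonneg d).trans_lt hd
  have hQ := toaderQ_pos hd (π / 4)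
  rw [toader_radicand]
  apply Real.lt_sqrt_of_sq_lt
  have hid := toader_norm_identity s d (π / 4)
  have h : (toaderQ s d (π / 4) - toaderN s d (π / 4) / toaderQ s d (π / 4) / 4) / s
      = (toaderQ s d (π / 4) ^ 2 - toaderN s d (π / 4) / 4) / (s * toaderQ s d (π / 4)) := by
    field_simp
  have hpos : 0 < (d ^ 2 / 2 * (s * cos (2 * (π / 4)) + d / 2) * (s * sin (2 * (π / 4)))) ^ 2 := by
    have h2 : 2 * (π / 4) = π / 2 := by ring
    rw [h2, cos_pi_div_two, sin_pi_div_two]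
    have : d ^ 2 / 2 * (s * 0 + d / 2) * (s * 1) ≠ 0 := by
      simp [hd0, hs.ne']
    positivity
  rw [h, div_pow, div_lt_iff₀ (by positivity)]
  nlinarith

lemma lt_toaderMean {s d : ℝ} (hd : |d| < s) (hd0 : d ≠ 0) :
    s + d ^ 2 / (4 * s) < toaderMean (s + d) (s - d) := by
  have hs : 0 < s := (abs_nonneg d).trans_lt hd
  have hcQ : Continuous (toaderQ s d) := by unfold toaderQ; fun_prop
  have hcR : Continuous fun θ => toaderN s d θ / toaderQ s d θ := by
    refine Continuous.div ?_ hcQ fun θ => (toaderQ_pos hd θ).ne'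
    unfold toaderN; fun_prop
  have hcL : Continuous fun θ => (toaderQ s d θ - toaderN s d θ / toaderQ s d θ / 4) / s :=
    (hcQ.sub (hcR.div_const 4)).div_const s
  have hlt := intervalIntegral.integral_lt_integral_of_continuousOn_of_le_of_exists_lt
    (a := 0) (b := π / 2) (by positivity) hcL.continuousOn
    (g := fun θ => √((s + d) ^ 2 * cos θ ^ 2 + (s - d) ^ 2 * sin θ ^ 2))
    (by fun_prop) (fun θ _ => toader_lower_le hd θ)
    ⟨π / 4, ⟨by positivity, by linarith [pi_pos]⟩, toader_lower_lt hd hd0⟩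
  rw [intervalIntegral.integral_div, intervalIntegral.integral_sub
    (hcQ.intervalIntegrable _ _) ((hcR.div_const 4).intervalIntegrable _ _),
    intervalIntegral.integral_div, integral_toaderN_div_toaderQ hd, integral_toaderQ] at hlt
  have hpi := pi_pos
  have h := mul_lt_mul_of_pos_left hlt (by positivity : 0 < 2 / π)
  unfold toaderMean
  refine lt_of_eq_of_lt ?_ h
  field_simp
  ring

theorem stmt1 (α lam : ℝ) (hα : α ∈ Set.Ioo (0 : ℝ) 1)
    (hlam : lam ∈ Set.Ioo (1 / 2 : ℝ) 1) (hlam2 : lam ≤ 1 / 2 + Real.sqrt (1 - α) / 4)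
    (a b : ℝ) (ha : 0 < a) (hb : 0 < b) (hab : a ≠ b) :
    contraMean (lam * a + (1 - lam) * b) (lam * b + (1 - lam) * a)
      < α * arithMean a b + (1 - α) * toaderMean a b := by
  obtain ⟨hα0, hα1⟩ := hα
  obtain ⟨hl0, hl1⟩ := hlam
  obtain ⟨s, hs⟩ : ∃ s, s = (a + b) / 2 := ⟨_, rfl⟩
  obtain ⟨d, hd⟩ : ∃ d, d = (a - b) / 2 := ⟨_, rfl⟩
  obtain rfl : a = s + d := by linarith
  obtain rfl : b = s - d := by linarith
  have hds : |d| < s := abs_lt.2 ⟨by linarith, by linarith⟩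
  have hd0 : d ≠ 0 := by
    rintro rfl
    simp at hab
  have hs0 : 0 < s := (abs_nonneg d).trans_lt hds
  have hT := lt_toaderMean hds hd0
  have hlam3 : (2 * lam - 1) ^ 2 ≤ (1 - α) / 4 := by
    have h1 : (√(1 - α)) ^ 2 = 1 - α := Real.sq_sqrt (by linarith)
    have h2 : 2 * lam - 1 ≤ √(1 - α) / 2 := by linarith
    nlinarith
  have hC : contraMean (lam * (s + d) + (1 - lam) * (s - d)) (lam * (s - d) + (1 - lam) * (s + d))
      = s + (2 * lam - 1) ^ 2 * (d ^ 2 / s) := by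
    have hsum : lam * (s + d) + (1 - lam) * (s - d) + (lam * (s - d) + (1 - lam) * (s + d))
        = 2 * s := by ring
    unfold contraMean
    rw [hsum]
    field_simp
    ring
  have hA : arithMean (s + d) (s - d) = s := by
    unfold arithMean
    ring
  rw [hC, hA]
  have h3 : (2 * lam - 1) ^ 2 * (d ^ 2 / s) ≤ (1 - α) / 4 * (d ^ 2 / s) :=
    mul_le_mul_of_nonneg_right hlam3 (by positivity)
  have h4 := mul_lt_mul_of_pos_left hT (sub_pos.2 hα1)
  have h5 : (1 - α) * (s + d ^ 2 / (4 * s)) = (1 - α) * s + (1 - α) / 4 * (d ^ 2 / s) := by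
    field_simp
  linarith
end

section
/- Let α ∈ (0,1) and μ ∈ (1/2, 1) with μ ≥ (1/2)·[1 + √((1-α)(4/π - 1))]. Then for all a, b > 0 with a ≠ b, one has α·A(a,b) + (1-α)·T(a,b) < C(μa+(1-μ)b, μb+(1-μ)a). -/
/-!
Write `a = m (1 + t)` and `b = m (1 - t)` with `m = (a + b) / 2` and `0 < |t| < 1`. Then the right
hand side is `m (1 + (2μ - 1)² t²)`, and `(2μ - 1)² ≥ (1 - α)(4/π - 1)`, so everything reduces to
`T(1 + t, 1 - t) < 1 + (4/π - 1) t²`.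

Let `Δ(θ) = √(1 - t² sin² θ)`. Since `(1+t)² cos² φ + (1-t)² sin² φ = 1 + t² + 2t cos 2φ`, the
Toader mean is `(1/π) ∫₀^π √(1 + t² + 2t cos β) dβ`. The Landen substitution
`β = θ + arcsin (t sin θ)` turns the integrand into `(t cos θ + Δ)² / Δ`
(`landen_substitution`), and an integration by parts gives
`T(1 + t, 1 - t) = 1 + (2/π) t² ∫₀^{π/2} cos² θ / (1 + Δ(θ)) dθ`
(`toader_integral_full`, `integral_fold`). Because `Δ > cos` on `(0, π/2)`, the last integral is
strictly smaller than `∫₀^{π/2} cos² θ / (1 + cos θ) dθ = 2 - π/2`, the value for `t = 1`.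
-/

open Real

/-- The radical `√(1 - t² sin² θ)` of the complete elliptic integrals with modulus `t`. -/
noncomputable def ellipticDelta (t θ : ℝ) : ℝ := √(1 - t ^ 2 * sin θ ^ 2)

section

variable {t : ℝ}

lemma one_sub_sq_mul_sin_sq_pos (ht : t ^ 2 < 1) (θ : ℝ) : 0 < 1 - t ^ 2 * sin θ ^ 2 := by
  nlinarith [sin_sq_add_cos_sq θ, sq_nonneg (sin θ), sq_nonneg (cos θ), sq_nonneg t]

lemma ellipticDelta_pos (ht : t ^ 2 < 1) (θ : ℝ) : 0 < ellipticDelta t θ :=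
  Real.sqrt_pos.2 (one_sub_sq_mul_sin_sq_pos ht θ)

lemma ellipticDelta_sq (ht : t ^ 2 < 1) (θ : ℝ) :
    ellipticDelta t θ ^ 2 = 1 - t ^ 2 * sin θ ^ 2 :=
  Real.sq_sqrt (one_sub_sq_mul_sin_sq_pos ht θ).le

lemma continuous_ellipticDelta : Continuous (ellipticDelta t) := by
  unfold ellipticDelta
  fun_prop

lemma hasDerivAt_ellipticDelta (ht : t ^ 2 < 1) (θ : ℝ) :
    HasDerivAt (ellipticDelta t) (-(t ^ 2 * sin θ * cos θ) / ellipticDelta t θ) θ := by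
  have h := ((((hasDerivAt_sin θ).pow 2).const_mul (t ^ 2)).const_sub 1).sqrt
    (one_sub_sq_mul_sin_sq_pos ht θ).ne'
  have hD : √(1 - t ^ 2 * sin θ ^ 2) ≠ 0 := (ellipticDelta_pos ht θ).ne'
  refine HasDerivAt.congr_deriv (f := ellipticDelta t) h ?_
  simp only [Pi.pow_apply, ellipticDelta]
  field_simp
  push_cast
  ring

/-- Geometrically, `t cos θ + Δ(θ)` is the distance from `-t` to the point `e^{iβ}` of the unit
circle that is seen from `-t` in the direction `θ`, where `β = θ + arcsin (t sin θ)`. -/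
lemma sqrt_at_landen_angle (ht : t ^ 2 < 1) (θ : ℝ) :
    √(1 + t ^ 2 + 2 * t * cos (θ + arcsin (t * sin θ))) = t * cos θ + ellipticDelta t θ := by
  have hD := ellipticDelta_pos ht θ
  have hD2 := ellipticDelta_sq ht θ
  have hsc := sin_sq_add_cos_sq θ
  have hts : (t * sin θ) ^ 2 ≤ 1 := by nlinarith [one_sub_sq_mul_sin_sq_pos ht θ]
  have habs := abs_le.1 ((sq_le_one_iff_abs_le_one _).1 hts)
  have hr : 0 ≤ t * cos θ + ellipticDelta t θ := by
    have : |t * cos θ| ≤ ellipticDelta t θ := abs_le_of_sq_le_sq (by nlinarith) hD.le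
    linarith [neg_abs_le (t * cos θ)]
  have hcos : cos (arcsin (t * sin θ)) = ellipticDelta t θ := by
    rw [cos_arcsin, mul_pow]
    rfl
  rw [cos_add, sin_arcsin habs.1 habs.2, hcos, ← Real.sqrt_sq hr]
  congr 1
  linear_combination -t ^ 2 * hsc - hD2

lemma hasDerivAt_landen_angle (ht : t ^ 2 < 1) (θ : ℝ) :
    HasDerivAt (fun θ => θ + arcsin (t * sin θ))
      (1 + t * cos θ / ellipticDelta t θ) θ := by
  have hpos := one_sub_sq_mul_sin_sq_pos ht θ
  have h1 : t * sin θ ≠ -1 := fun h => by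
    have : (t * sin θ) ^ 2 = 1 := by rw [h]; norm_num
    nlinarith
  have h2 : t * sin θ ≠ 1 := fun h => by
    have : (t * sin θ) ^ 2 = 1 := by rw [h]; norm_num
    nlinarith
  have h := (hasDerivAt_id θ).add
    ((hasDerivAt_arcsin h1 h2).comp θ ((hasDerivAt_sin θ).const_mul t))
  refine h.congr_deriv ?_
  rw [mul_pow, ellipticDelta]
  ring

lemma landen_substitution (ht : t ^ 2 < 1) :
    ∫ β in (0 : ℝ)..π, √(1 + t ^ 2 + 2 * t * cos β) =
      ∫ θ in (0 : ℝ)..π, (t * cos θ + ellipticDelta t θ) *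
        (1 + t * cos θ / ellipticDelta t θ) := by
  have hc := continuous_ellipticDelta (t := t)
  have hne : ∀ θ, ellipticDelta t θ ≠ 0 := fun θ => (ellipticDelta_pos ht θ).ne'
  have h := intervalIntegral.integral_comp_mul_deriv (a := 0) (b := π)
    (f := fun θ => θ + arcsin (t * sin θ)) (f' := fun θ => 1 + t * cos θ / ellipticDelta t θ)
    (g := fun β => √(1 + t ^ 2 + 2 * t * cos β))
    (fun θ _ => hasDerivAt_landen_angle ht θ)
    (Continuous.continuousOn (by fun_prop (disch := exact hne _)))
    (by fun_prop)
  simp only [Function.comp_def, sqrt_at_landen_angle ht, sin_zero, sin_pi, mul_zero, arcsin_zero,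
    add_zero] at h
  exact h.symm

/-- The boundary function of the integration by parts; away from multiples of `π` it equals
`2t sin θ + cot θ (1 - Δ(θ))`. -/
lemma hasDerivAt_boundary (ht : t ^ 2 < 1) (θ : ℝ) :
    HasDerivAt (fun θ => 2 * t * sin θ + t ^ 2 * (sin θ * cos θ) / (1 + ellipticDelta t θ))
      ((t * cos θ + ellipticDelta t θ) * (1 + t * cos θ / ellipticDelta t θ)
        - (1 + t ^ 2 * (cos θ ^ 2 / (1 + ellipticDelta t θ)))) θ := by
  have hD := ellipticDelta_pos ht θ
  have hD2 := ellipticDelta_sq ht θ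
  have h := ((hasDerivAt_sin θ).const_mul (2 * t)).add
    ((((hasDerivAt_sin θ).mul (hasDerivAt_cos θ)).const_mul (t ^ 2)).div
      ((hasDerivAt_ellipticDelta ht θ).const_add 1) (by positivity))
  refine h.congr_deriv ?_
  simp only [Pi.mul_apply]
  generalize ellipticDelta t θ = D at *
  generalize sin θ = s at *
  generalize cos θ = c at *
  field_simp
  linear_combination (t ^ 2 * c ^ 2 - D - D ^ 2) * hD2

lemma toader_integral_full (ht : t ^ 2 < 1) :
    ∫ β in (0 : ℝ)..π, √(1 + t ^ 2 + 2 * t * cos β) =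
      π + t ^ 2 * ∫ θ in (0 : ℝ)..π, cos θ ^ 2 / (1 + ellipticDelta t θ) := by
  have hc := continuous_ellipticDelta (t := t)
  have hne : ∀ θ, ellipticDelta t θ ≠ 0 := fun θ => (ellipticDelta_pos ht θ).ne'
  have hne' : ∀ θ, 1 + ellipticDelta t θ ≠ 0 := fun θ => by
    have := ellipticDelta_pos ht θ
    positivity
  have hcF : Continuous fun θ => (t * cos θ + ellipticDelta t θ) *
      (1 + t * cos θ / ellipticDelta t θ) := by
    fun_prop (disch := exact hne _)
  have hcG : Continuous fun θ => cos θ ^ 2 / (1 + ellipticDelta t θ) := by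
    fun_prop (disch := exact hne' _)
  have hcG' : Continuous fun θ => 1 + t ^ 2 * (cos θ ^ 2 / (1 + ellipticDelta t θ)) := by
    fun_prop
  have h := intervalIntegral.integral_eq_sub_of_hasDerivAt (a := 0) (b := π)
    (fun θ _ => hasDerivAt_boundary ht θ) ((hcF.sub hcG').intervalIntegrable _ _)
  rw [intervalIntegral.integral_sub (hcF.intervalIntegrable _ _) (hcG'.intervalIntegrable _ _),
    intervalIntegral.integral_add (by simp) ((hcG.const_mul _).intervalIntegrable _ _),
    intervalIntegral.integral_const_mul] at h
  simp at h
  rw [landen_substitution ht]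
  linarith

lemma integral_fold (ht : t ^ 2 < 1) :
    ∫ θ in (0 : ℝ)..π, cos θ ^ 2 / (1 + ellipticDelta t θ) =
      2 * ∫ θ in (0 : ℝ)..(π / 2), cos θ ^ 2 / (1 + ellipticDelta t θ) := by
  have hc := continuous_ellipticDelta (t := t)
  have hne' : ∀ θ, 1 + ellipticDelta t θ ≠ 0 := fun θ => by
    have := ellipticDelta_pos ht θ
    positivity
  have hcG : Continuous fun θ => cos θ ^ 2 / (1 + ellipticDelta t θ) := by
    fun_prop (disch := exact hne' _)
  have h := intervalIntegral.integral_comp_sub_left (a := 0) (b := π / 2)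
    (fun θ => cos θ ^ 2 / (1 + ellipticDelta t θ)) π
  simp only [cos_pi_sub, ellipticDelta, sin_pi_sub, neg_sq, sub_zero] at h
  rw [show π - π / 2 = π / 2 by ring] at h
  rw [← intervalIntegral.integral_add_adjacent_intervals (hcG.intervalIntegrable 0 (π / 2))
    (hcG.intervalIntegrable (π / 2) π)]
  simp only [ellipticDelta]
  rw [← h]
  ring

end

lemma one_add_cos_pos {θ : ℝ} (h : θ ∈ Set.Icc 0 (π / 2)) : 0 < 1 + cos θ := by
  have := cos_nonneg_of_mem_Icc ⟨by linarith [h.1, pi_pos], h.2⟩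
  linarith

lemma integral_cos_sq_div_one_add_cos :
    ∫ θ in (0 : ℝ)..(π / 2), cos θ ^ 2 / (1 + cos θ) = 2 - π / 2 := by
  have hle : (0 : ℝ) ≤ π / 2 := by positivity
  -- The term `sin θ / (1 + cos θ)` is `tan (θ / 2)`, an antiderivative of `1 / (1 + cos θ)`.
  have h := intervalIntegral.integral_eq_sub_of_hasDerivAt (a := 0) (b := π / 2)
    (f := fun θ => sin θ - θ + sin θ / (1 + cos θ)) (f' := fun θ => cos θ ^ 2 / (1 + cos θ))
    (fun θ hθ => by
      rw [Set.uIcc_of_le hle] at hθ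
      have hp := one_add_cos_pos hθ
      have h := ((hasDerivAt_sin θ).sub (hasDerivAt_id θ)).add
        ((hasDerivAt_sin θ).div ((hasDerivAt_cos θ).const_add 1) hp.ne')
      refine h.congr_deriv ?_
      field_simp
      linear_combination sin_sq_add_cos_sq θ)
    (ContinuousOn.intervalIntegrable (by
      rw [Set.uIcc_of_le hle]
      exact ContinuousOn.div (by fun_prop) (by fun_prop) fun θ hθ => (one_add_cos_pos hθ).ne'))
  rw [h]
  simp
  ring

lemma integral_lt {t : ℝ} (ht : t ^ 2 < 1) :
    ∫ θ in (0 : ℝ)..(π / 2), cos θ ^ 2 / (1 + ellipticDelta t θ) < 2 - π / 2 := by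
  have hpi := pi_pos
  have hc := continuous_ellipticDelta (t := t)
  rw [← integral_cos_sq_div_one_add_cos]
  apply intervalIntegral.integral_lt_integral_of_continuousOn_of_le_of_exists_lt (by positivity)
  · refine Continuous.continuousOn (Continuous.div (by fun_prop) (by fun_prop) fun θ => ?_)
    have := ellipticDelta_pos ht θ
    positivity
  · exact ContinuousOn.div (by fun_prop) (by fun_prop) fun θ hθ => (one_add_cos_pos hθ).ne'
  · intro θ hθ
    have hp := one_add_cos_pos ⟨hθ.1.le, hθ.2⟩
    have hle : cos θ ≤ ellipticDelta t θ := by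
      apply le_of_sq_le_sq _ (ellipticDelta_pos ht θ).le
      rw [ellipticDelta_sq ht]
      nlinarith [sin_sq_add_cos_sq θ, sq_nonneg (sin θ)]
    gcongr
  · refine ⟨π / 4, ⟨by positivity, by linarith⟩, ?_⟩
    have hcos : 0 < cos (π / 4) := cos_pos_of_mem_Ioo ⟨by linarith, by linarith⟩
    have hsin : 0 < sin (π / 4) := sin_pos_of_pos_of_lt_pi (by linarith) (by linarith)
    have hlt : cos (π / 4) < ellipticDelta t (π / 4) := by
      apply lt_of_pow_lt_pow_left₀ 2 (ellipticDelta_pos ht _).le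
      rw [ellipticDelta_sq ht]
      nlinarith [sin_sq_add_cos_sq (π / 4), pow_pos hsin 2]
    gcongr

lemma toaderMean_eq {m t : ℝ} (hm : 0 < m) :
    toaderMean (m * (1 + t)) (m * (1 - t)) =
      m / π * ∫ β in (0 : ℝ)..π, √(1 + t ^ 2 + 2 * t * cos β) := by
  have h := intervalIntegral.integral_comp_mul_left (a := 0) (b := π / 2)
    (fun β => √(1 + t ^ 2 + 2 * t * cos β)) (two_ne_zero (α := ℝ))
  rw [mul_zero, show 2 * (π / 2) = π by ring, smul_eq_mul] at h
  have h2 : ∀ θ : ℝ, √((m * (1 + t)) ^ 2 * cos θ ^ 2 + (m * (1 - t)) ^ 2 * sin θ ^ 2) =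
      m * √(1 + t ^ 2 + 2 * t * cos (2 * θ)) := fun θ => by
    rw [cos_two_mul, ← Real.sqrt_sq hm.le, ← Real.sqrt_mul (sq_nonneg _), Real.sqrt_sq hm.le]
    congr 1
    linear_combination m ^ 2 * (1 - t) ^ 2 * sin_sq_add_cos_sq θ
  unfold toaderMean
  simp only [h2]
  rw [intervalIntegral.integral_const_mul, h]
  ring

/-- The case `α = 0` of the inequality, with the optimal constant `4/π - 1`. -/
lemma toaderMean_lt {m t : ℝ} (hm : 0 < m) (ht0 : t ≠ 0) (ht : t ^ 2 < 1) :
    toaderMean (m * (1 + t)) (m * (1 - t)) < m * (1 + (4 / π - 1) * t ^ 2) := by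
  have hpi := pi_pos
  have ht2 : 0 < t ^ 2 := by positivity
  rw [toaderMean_eq hm, toader_integral_full ht, integral_fold ht]
  calc _ < m / π * (π + t ^ 2 * (2 * (2 - π / 2))) := by
        gcongr
        exact integral_lt ht
    _ = _ := by
        field_simp
        ring

theorem stmt2 (α μ : ℝ) (hα : α ∈ Set.Ioo (0 : ℝ) 1)
    (hμ : μ ∈ Set.Ioo (1 / 2 : ℝ) 1)
    (hμ' : μ ≥ 1 / 2 * (1 + Real.sqrt ((1 - α) * (4 / π - 1))))
    (a b : ℝ) (ha : 0 < a) (hb : 0 < b) (hab : a ≠ b) :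
    α * arithMean a b + (1 - α) * toaderMean a b
      < contraMean (μ * a + (1 - μ) * b) (μ * b + (1 - μ) * a) := by
  obtain ⟨m, t, hm, ht0, ht, rfl, rfl⟩ : ∃ m t : ℝ, 0 < m ∧ t ≠ 0 ∧ t ^ 2 < 1 ∧
      a = m * (1 + t) ∧ b = m * (1 - t) := by
    have hs : 0 < a + b := by positivity
    refine ⟨(a + b) / 2, (a - b) / (a + b), by positivity,
      div_ne_zero (sub_ne_zero.2 hab) hs.ne', ?_, ?_, ?_⟩
    · rw [div_pow, div_lt_one (by positivity)]
      nlinarith [mul_pos ha hb]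
    · field_simp
      ring
    · field_simp
      ring
  have hT := toaderMean_lt hm ht0 ht
  have hμ2 : (1 - α) * (4 / π - 1) ≤ (2 * μ - 1) ^ 2 :=
    (Real.sqrt_le_left (by linarith [hμ.1])).1 (by linarith)
  have hC : contraMean (μ * (m * (1 + t)) + (1 - μ) * (m * (1 - t)))
      (μ * (m * (1 - t)) + (1 - μ) * (m * (1 + t))) = m * (1 + (2 * μ - 1) ^ 2 * t ^ 2) := by
    unfold contraMean
    rw [div_eq_iff (by ring_nf; positivity)]
    ring
  have hA : arithMean (m * (1 + t)) (m * (1 - t)) = m := by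
    unfold arithMean
    ring
  rw [hC, hA]
  calc _ < α * m + (1 - α) * (m * (1 + (4 / π - 1) * t ^ 2)) := by
        have : 0 < 1 - α := by linarith [hα.2]
        gcongr
    _ = m * (1 + (1 - α) * (4 / π - 1) * t ^ 2) := by ring
    _ ≤ _ := by gcongr
end

section
/- Let u, α ∈ (0,1) and define f_{u,α}(r) = u·r² − (1−α)·{(2/π)·[2E(r) − (1−r²)K(r)] − 1} for r ∈ (0,1). Then f_{u,α}(r) < 0 for all r ∈ (0,1) if and only if u ≤ (1−α)/4. -/
open Real

/-!
Write `x = r²`. The combination `2E(r) - (1 - r²)K(r)` is the integral over `[0, π/2]` of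
`2√(1 - x sin²θ) - (1 - x)/√(1 - x sin²θ)`. Subtracting the derivative of
`W(θ) = x sin θ cos θ / (1 + √(1 - x sin²θ))`, which vanishes at both ends, gives
`2E - (1 - x)K = ∫ (1 + x cos²θ / (1 + √(1 - x sin²θ)))` (`elliptic_combination`).

The root lies in `[1 - x, 1]` and is less than `1` for `θ > 0`. Since `∫ cos²θ = π/4`, the quantity
`(2/π)(2E - (1 - x)K) - 1` is strictly above `x/4` (`lower_bound`) and at most `x/(2(2 - x))`
(`upper_bound`). The first bound gives sufficiency of `u ≤ (1 - α)/4`, the second, as `x → 0`,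
necessity.
-/

/-- The complete elliptic integral of the first kind. -/
noncomputable def ellipticK (r : ℝ) : ℝ :=
  ∫ θ in (0 : ℝ)..(π / 2), (Real.sqrt (1 - r ^ 2 * sin θ ^ 2))⁻¹

/-- The complete elliptic integral of the second kind. -/
noncomputable def ellipticE (r : ℝ) : ℝ :=
  ∫ θ in (0 : ℝ)..(π / 2), Real.sqrt (1 - r ^ 2 * sin θ ^ 2)

/-- The radicand common to both elliptic integrals stays above `1 - r²`. -/
lemma one_sub_le_radicand (r θ : ℝ) : 1 - r ^ 2 ≤ 1 - r ^ 2 * sin θ ^ 2 := by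
  nlinarith [sin_sq_le_one θ, sq_nonneg r]

lemma radicand_pos {r : ℝ} (hr : r ∈ Set.Ioo (0 : ℝ) 1) (θ : ℝ) :
    0 < 1 - r ^ 2 * sin θ ^ 2 := by
  have := one_sub_le_radicand r θ
  nlinarith [hr.1, hr.2]

/-- The integrand of `2E - (1 - r²)K` differs from the integrand of `elliptic_combination` by an
exact derivative. -/
lemma hasDerivAt_primitive {r : ℝ} (hr : r ∈ Set.Ioo (0 : ℝ) 1) (θ : ℝ) :
    HasDerivAt (fun θ : ℝ => r ^ 2 * (sin θ * cos θ) / (1 + √(1 - r ^ 2 * sin θ ^ 2)))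
      ((2 * √(1 - r ^ 2 * sin θ ^ 2) - (1 - r ^ 2) * (√(1 - r ^ 2 * sin θ ^ 2))⁻¹) -
        (1 + r ^ 2 * (cos θ ^ 2 / (1 + √(1 - r ^ 2 * sin θ ^ 2))))) θ := by
  have hpos := radicand_pos hr θ
  have hq := sqrt_pos.2 hpos
  have hsq := sq_sqrt hpos.le
  have h1 : HasDerivAt (fun θ : ℝ => 1 - r ^ 2 * sin θ ^ 2)
      (-(r ^ 2 * (2 * sin θ * cos θ))) θ := by
    have := (((hasDerivAt_sin θ).pow 2).const_mul (r ^ 2)).const_sub 1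
    refine this.congr_deriv ?_
    norm_num
  have h2 := (h1.sqrt hpos.ne').const_add 1
  have h3 := ((hasDerivAt_sin θ).mul (hasDerivAt_cos θ)).const_mul (r ^ 2)
  have h4 := h3.div h2 (by positivity)
  refine h4.congr_deriv ?_
  simp only [Pi.mul_apply]
  have hc := cos_sq' θ
  generalize √(1 - r ^ 2 * sin θ ^ 2) = q at *
  generalize cos θ = c at *
  generalize sin θ = s at *
  have hne : (1 + q) ≠ 0 := by positivity
  field_simp
  have hq4 : q ^ 4 = (1 - r ^ 2 * s ^ 2) ^ 2 := by rw [← hsq]; ring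
  have hq3 : q ^ 3 = (1 - r ^ 2 * s ^ 2) * q := by rw [← hsq]; ring
  ring_nf
  simp only [hq4, hq3, hsq, hc]
  ring

lemma continuous_integrand (r : ℝ) :
    Continuous fun θ : ℝ => cos θ ^ 2 / (1 + √(1 - r ^ 2 * sin θ ^ 2)) := by
  refine Continuous.div (by fun_prop) (by fun_prop) fun θ => ?_
  have := sqrt_nonneg (1 - r ^ 2 * sin θ ^ 2)
  positivity

lemma integral_cos_sq_quarter : ∫ θ in (0 : ℝ)..(π / 2), cos θ ^ 2 = π / 4 := by
  rw [integral_cos_sq]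
  simp
  ring

lemma elliptic_combination {r : ℝ} (hr : r ∈ Set.Ioo (0 : ℝ) 1) :
    2 * ellipticE r - (1 - r ^ 2) * ellipticK r =
      π / 2 + r ^ 2 * ∫ θ in (0 : ℝ)..(π / 2), cos θ ^ 2 / (1 + √(1 - r ^ 2 * sin θ ^ 2)) := by
  have cE : Continuous fun θ : ℝ => √(1 - r ^ 2 * sin θ ^ 2) := by fun_prop
  have cK : Continuous fun θ : ℝ => (√(1 - r ^ 2 * sin θ ^ 2))⁻¹ :=
    cE.inv₀ fun θ => (sqrt_pos.2 (radicand_pos hr θ)).ne'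
  have cJ := continuous_integrand r
  have c1 : Continuous fun θ : ℝ =>
      2 * √(1 - r ^ 2 * sin θ ^ 2) - (1 - r ^ 2) * (√(1 - r ^ 2 * sin θ ^ 2))⁻¹ :=
    (cE.const_mul 2).sub (cK.const_mul _)
  have c2 : Continuous fun θ : ℝ =>
      1 + r ^ 2 * (cos θ ^ 2 / (1 + √(1 - r ^ 2 * sin θ ^ 2))) :=
    continuous_const.add (cJ.const_mul _)
  have key := intervalIntegral.integral_eq_sub_of_hasDerivAt
    (a := 0) (b := π / 2) (fun θ _ => hasDerivAt_primitive hr θ)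
    ((c1.sub c2).intervalIntegrable _ _)
  rw [intervalIntegral.integral_sub (c1.intervalIntegrable _ _) (c2.intervalIntegrable _ _),
    intervalIntegral.integral_sub ((cE.const_mul 2).intervalIntegrable _ _)
      ((cK.const_mul _).intervalIntegrable _ _),
    intervalIntegral.integral_add (continuous_const.intervalIntegrable _ _)
      ((cJ.const_mul _).intervalIntegrable _ _)] at key
  simp only [intervalIntegral.integral_const_mul, intervalIntegral.integral_const] at key
  simp only [sin_pi_div_two, cos_pi_div_two, sin_zero, cos_zero, smul_eq_mul] at key
  unfold ellipticE ellipticK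
  simp only [mul_zero, zero_div, sub_zero, mul_one] at key
  linarith

lemma lower_bound {r : ℝ} (hr : r ∈ Set.Ioo (0 : ℝ) 1) :
    r ^ 2 / 4 < 2 / π * (2 * ellipticE r - (1 - r ^ 2) * ellipticK r) - 1 := by
  have hI : π / 8 < ∫ θ in (0 : ℝ)..(π / 2), cos θ ^ 2 / (1 + √(1 - r ^ 2 * sin θ ^ 2)) := by
    have hc : ∫ θ in (0 : ℝ)..(π / 2), cos θ ^ 2 / 2 = π / 8 := by
      rw [intervalIntegral.integral_div, integral_cos_sq_quarter]; ring
    rw [← hc]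
    have hle : ∀ θ : ℝ, √(1 - r ^ 2 * sin θ ^ 2) ≤ 1 := fun θ => by
      rw [sqrt_le_iff]
      refine ⟨zero_le_one, ?_⟩
      nlinarith [mul_nonneg (sq_nonneg r) (sq_nonneg (sin θ))]
    refine intervalIntegral.integral_lt_integral_of_continuousOn_of_le_of_exists_lt
      (by positivity) (by fun_prop) (continuous_integrand r).continuousOn (fun θ _ => ?_)
      ⟨π / 4, ⟨by positivity, by linarith [pi_pos]⟩, ?_⟩
    · have := hle θ
      gcongr
      linarith
    · have hlt : √(1 - r ^ 2 * sin (π / 4) ^ 2) < 1 := by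
        rw [sqrt_lt' one_pos]
        have : 0 < sin (π / 4) := by rw [sin_pi_div_four]; positivity
        have := hr.1
        have : 0 < r ^ 2 * sin (π / 4) ^ 2 := by positivity
        linarith
      have : 0 < cos (π / 4) := by rw [cos_pi_div_four]; positivity
      gcongr
      linarith
  rw [elliptic_combination hr]
  generalize (∫ θ in (0 : ℝ)..(π / 2), cos θ ^ 2 / (1 + √(1 - r ^ 2 * sin θ ^ 2))) = J at *
  have hp := pi_pos
  have hr2 : 0 < r ^ 2 := pow_pos hr.1 2
  have e : 2 / π * (π / 2 + r ^ 2 * J) - 1 = r ^ 2 * (2 / π * J) := by field_simp; ring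
  rw [e]
  have : 1 / 4 < 2 / π * J := by
    rw [div_mul_eq_mul_div, lt_div_iff₀ hp]; linarith
  nlinarith

lemma upper_bound {r : ℝ} (hr : r ∈ Set.Ioo (0 : ℝ) 1) :
    2 / π * (2 * ellipticE r - (1 - r ^ 2) * ellipticK r) - 1 ≤ r ^ 2 / (2 * (2 - r ^ 2)) := by
  have hr2 : 0 < r ^ 2 := pow_pos hr.1 2
  have hr1 : r ^ 2 < 1 := by nlinarith [hr.1, hr.2]
  have hI : ∫ θ in (0 : ℝ)..(π / 2), cos θ ^ 2 / (1 + √(1 - r ^ 2 * sin θ ^ 2)) ≤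
      π / 4 / (2 - r ^ 2) := by
    rw [← integral_cos_sq_quarter, ← intervalIntegral.integral_div]
    refine intervalIntegral.integral_mono_on (by positivity)
      ((continuous_integrand r).intervalIntegrable _ _)
      (Continuous.intervalIntegrable (by fun_prop) _ _) fun θ _ => ?_
    have : 1 - r ^ 2 ≤ √(1 - r ^ 2 * sin θ ^ 2) := by
      apply le_sqrt_of_sq_le
      nlinarith [one_sub_le_radicand r θ]
    gcongr
    · linarith
    · linarith
  rw [elliptic_combination hr]
  generalize (∫ θ in (0 : ℝ)..(π / 2), cos θ ^ 2 / (1 + √(1 - r ^ 2 * sin θ ^ 2))) = J at *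
  have hp := pi_pos
  have hd : 0 < 2 - r ^ 2 := by linarith
  calc 2 / π * (π / 2 + r ^ 2 * J) - 1 = r ^ 2 * (2 / π * J) := by field_simp; ring
    _ ≤ r ^ 2 * (2 / π * (π / 4 / (2 - r ^ 2))) := by gcongr
    _ = r ^ 2 / (2 * (2 - r ^ 2)) := by field_simp; ring

theorem stmt4 (u α : ℝ) (hu : u ∈ Set.Ioo (0 : ℝ) 1) (hα : α ∈ Set.Ioo (0 : ℝ) 1) :
    (∀ r ∈ Set.Ioo (0 : ℝ) 1,
      u * r ^ 2 -
        (1 - α) * (2 / π * (2 * ellipticE r - (1 - r ^ 2) * ellipticK r) - 1) < 0) ↔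
    u ≤ (1 - α) / 4 := by
  have hu0 := hu.1
  have ha : 0 < 1 - α := by linarith [hα.2]
  constructor
  · intro h
    by_contra! hlt
    -- For this `r`, `2u(2 - r²) > 2u(2 - r) = 2u + (1 - α)/2 > 1 - α`.
    obtain ⟨r, hrdef⟩ : ∃ r, r = 1 - (1 - α) / (4 * u) := ⟨_, rfl⟩
    have hq1 : (1 - α) / (4 * u) < 1 := by rw [div_lt_one (by positivity)]; linarith
    have hq0 : 0 < (1 - α) / (4 * u) := by positivity
    have hr : r ∈ Set.Ioo (0 : ℝ) 1 := ⟨by linarith, by linarith⟩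
    have hur : u * r = u - (1 - α) / 4 := by rw [hrdef]; field_simp
    have hr2 : 0 < r ^ 2 := pow_pos hr.1 2
    have hrr : r ^ 2 < r := by nlinarith [hr.1, hr.2]
    have hd : 0 < 2 * (2 - r ^ 2) := by linarith [hr.2]
    have h1 := h r hr
    have h2 := mul_le_mul_of_nonneg_left (upper_bound hr) ha.le
    have h3 : u * r ^ 2 < (1 - α) * (r ^ 2 / (2 * (2 - r ^ 2))) := by linarith
    rw [← mul_div_assoc, lt_div_iff₀ hd] at h3
    have h4 : u * (2 * (2 - r ^ 2)) < 1 - α := by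
      refine lt_of_mul_lt_mul_right ?_ hr2.le
      linarith
    nlinarith
  · intro h r hr
    have h1 := mul_lt_mul_of_pos_left (lower_bound hr) ha
    have h2 := mul_le_mul_of_nonneg_right h (sq_nonneg r)
    linarith
end

section
/- For all r ∈ (0,1), writing r' = √(1−r²), one has the lower bound (π/2)·[(17 + 30r' + 17r'²)/(8(1+r')) − 3(1+r')/2] < E(r). -/
/-!
Put `s = √(1 - r²)` and `l = (1 - s) / (1 + s) ∈ (0, 1)`. Since
`1 - r² sin² θ = ((1 + s) / 2)² |1 + l e^{2iθ}|²`, the integral `E(r)` equals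
`(π / 2) · (1 + s) / 2` times the average of `|1 + z|` over the circle `|z| = l`, while the
claimed lower bound is `(π / 2) · (1 + s) / 2 · (1 + l² / 4)`. It remains to show that the average
exceeds `1 + l² / 4`, which are the first two terms of its Parseval expansion.

Let `w(z) = √(1 + z)`, holomorphic on the unit disc, and `w = 1 + z D`. Expanding
`0 < |w - (1 + z / 2)|²` and using `z̄ z = l²` on the circle gives
`|1 + z| = |w|² > Re (2 w + l² D) - 1 - l² / 4` (`re_lt_norm`). The function `2 w + l² D` is
holomorphic, so its average is its value `2 + l² / 2` at the origin
(`circle_integral_norm_lower_bound`).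
-/

open Real

/-- The pointwise Bessel inequality: it says `0 < ‖w - (1 + z / 2)‖ ^ 2`, where `w` is a square
root of `1 + z`, and `d` is the difference quotient `(w - 1) / z`. -/
lemma re_lt_norm (z w d : ℂ) (hz : z ≠ 0) (hw : w ^ 2 = 1 + z) (hd : w = 1 + z * d) :
    (2 * w + ((‖z‖ ^ 2 : ℝ) : ℂ) * d).re - 1 - ‖z‖ ^ 2 / 4 < ‖1 + z‖ := by
  have hne : w - 1 - z / 2 ≠ 0 := by
    intro h
    have h1 : w = 1 + z / 2 := by linear_combination h
    rw [h1] at hw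
    have h2 : z ^ 2 = 0 := by linear_combination 4 * hw
    exact hz (pow_eq_zero_iff two_ne_zero |>.1 h2)
  have hpos := Complex.normSq_pos.2 hne
  have hnorm : ‖1 + z‖ = Complex.normSq w := by
    rw [← hw, norm_pow, Complex.sq_norm]
  have hD : ((‖z‖ ^ 2 : ℝ) : ℂ) * d = (starRingEnd ℂ) z * (w - 1) := by
    rw [Complex.sq_norm, Complex.normSq_eq_conj_mul_self, hd]
    ring
  rw [hD, hnorm, Complex.sq_norm]
  simp only [Complex.normSq_apply, Complex.add_re, Complex.mul_re, Complex.sub_re, Complex.sub_im,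
    Complex.conj_re, Complex.conj_im, Complex.one_re, Complex.one_im, Complex.re_ofNat,
    Complex.im_ofNat, Complex.div_ofNat_re, Complex.div_ofNat_im] at hpos ⊢
  nlinarith

lemma circle_integral_norm_lower_bound (l : ℝ) (h0 : 0 < l) (h1 : l < 1) :
    2 * π * (1 + l ^ 2 / 4) < ∫ φ in (0 : ℝ)..(2 * π), ‖1 + circleMap 0 l φ‖ := by
  set w : ℂ → ℂ := fun z => (1 + z) ^ ((2 : ℕ)⁻¹ : ℂ) with hwdef
  set D : ℂ → ℂ := dslope w 0 with hDdef
  set G : ℂ → ℂ := fun z => 2 * w z + ((l ^ 2 : ℝ) : ℂ) * D z with hGdef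
  have hslit : ∀ z ∈ Metric.ball (0 : ℂ) 1, 1 + z ∈ Complex.slitPlane := by
    intro z hz
    apply Complex.mem_slitPlane_of_norm_lt_one
    simpa using hz
  have hw : DifferentiableOn ℂ w (Metric.ball 0 1) := by
    intro z hz
    exact (((differentiableAt_id.const_add 1).cpow_const
      (hslit z hz))).differentiableWithinAt
  have hD : DifferentiableOn ℂ D (Metric.ball 0 1) :=
    (Complex.differentiableOn_dslope (Metric.ball_mem_nhds 0 one_pos)).2 hw
  have hG : DifferentiableOn ℂ G (Metric.ball 0 1) := (hw.const_mul 2).add (hD.const_mul _)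
  have hw0 : w 0 = 1 := by simp [hwdef]
  have hD0 : D 0 = 1 / 2 := by
    have h : HasDerivAt w (((2 : ℕ)⁻¹ : ℂ) * (1 + 0) ^ (((2 : ℕ)⁻¹ : ℂ) - 1) * 1) 0 :=
      ((hasDerivAt_id (0 : ℂ)).const_add 1).cpow_const (hslit 0 (by simp))
    rw [hDdef, dslope_same, h.deriv]
    simp
  have hsub : Metric.closedBall (0 : ℂ) |l| ⊆ Metric.ball 0 1 := by
    rw [abs_of_pos h0]
    exact Metric.closedBall_subset_ball h1
  have hmean : Real.circleAverage G 0 l = G 0 :=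
    circleAverage_of_differentiable_on_off_countable Set.countable_empty
      (hG.continuousOn.mono hsub) fun z hz =>
        hG.differentiableAt (Metric.isOpen_ball.mem_nhds
          (hsub (Metric.ball_subset_closedBall hz.1)))
  have hcirc : ∀ φ, circleMap 0 l φ ∈ Metric.ball (0 : ℂ) 1 := by
    intro φ
    simpa [abs_of_pos h0] using h1
  have hGc : Continuous fun φ => G (circleMap 0 l φ) :=
    hG.continuousOn.comp_continuous (continuous_circleMap 0 l) hcirc
  have hint : ∫ φ in (0 : ℝ)..(2 * π), (G (circleMap 0 l φ)).re = 2 * π * (2 + l ^ 2 / 2) := by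
    have h := Complex.reCLM.intervalIntegral_comp_comm (hGc.intervalIntegrable
      (μ := MeasureTheory.volume) 0 (2 * π))
    simp only [Complex.reCLM_apply] at h
    rw [h]
    rw [Real.circleAverage_def, inv_smul_eq_iff₀ (by positivity)] at hmean
    rw [hmean]
    have : G 0 = ((2 + l ^ 2 / 2 : ℝ) : ℂ) := by
      simp only [hGdef, hw0, hD0]
      push_cast
      ring
    rw [this, Complex.smul_re, Complex.ofReal_re, smul_eq_mul]
  have hpt : ∀ φ, (G (circleMap 0 l φ)).re - (1 + l ^ 2 / 4) < ‖1 + circleMap 0 l φ‖ := by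
    intro φ
    have hn : ‖circleMap 0 l φ‖ = l := by simp [abs_of_pos h0]
    have hz : circleMap 0 l φ ≠ 0 := by
      rw [← norm_pos_iff, hn]
      exact h0
    have h := re_lt_norm (circleMap 0 l φ) (w (circleMap 0 l φ)) (D (circleMap 0 l φ)) hz
      (Complex.cpow_nat_inv_pow _ two_ne_zero) (by
        have := sub_smul_dslope w 0 (circleMap 0 l φ)
        rw [sub_zero, hw0, smul_eq_mul] at this
        linear_combination -this)
    rw [hn] at h
    simp only [hGdef]
    linarith
  have hGre : Continuous fun φ => (G (circleMap 0 l φ)).re := Complex.continuous_re.comp hGc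
  calc 2 * π * (1 + l ^ 2 / 4)
      = ∫ φ in (0 : ℝ)..(2 * π), ((G (circleMap 0 l φ)).re - (1 + l ^ 2 / 4)) := by
        rw [intervalIntegral.integral_sub (hGre.intervalIntegrable _ _) (by simp), hint,
          intervalIntegral.integral_const, smul_eq_mul]
        ring
    _ < _ := by
        apply intervalIntegral.integral_lt_integral_of_continuousOn_of_le_of_exists_lt
          (by positivity) (hGre.sub continuous_const).continuousOn
          (by have := continuous_circleMap (0 : ℂ) l; fun_prop)
          (fun φ _ => (hpt φ).le) ⟨0, ⟨le_rfl, by positivity⟩, hpt 0⟩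

lemma norm_one_add_circleMap (l φ : ℝ) :
    ‖1 + circleMap 0 l φ‖ = √(1 + l ^ 2 + 2 * l * cos φ) := by
  rw [Complex.norm_def]
  congr 1
  rw [circleMap_zero, Complex.exp_mul_I, ← Complex.ofReal_cos, ← Complex.ofReal_sin,
    Complex.normSq_apply]
  simp [-Complex.ofReal_cos, -Complex.ofReal_sin]
  linear_combination l ^ 2 * Real.sin_sq_add_cos_sq φ

theorem stmt5 (r : ℝ) (hr : r ∈ Set.Ioo (0 : ℝ) 1) :
    π / 2 * ((17 + 30 * Real.sqrt (1 - r ^ 2) + 17 * Real.sqrt (1 - r ^ 2) ^ 2) /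
        (8 * (1 + Real.sqrt (1 - r ^ 2))) - 3 * (1 + Real.sqrt (1 - r ^ 2)) / 2)
      < ellipticE r := by
  obtain ⟨hr0, hr1⟩ := hr
  have hs2 : √(1 - r ^ 2) ^ 2 = 1 - r ^ 2 := Real.sq_sqrt (by nlinarith)
  have hs0 : 0 < √(1 - r ^ 2) := Real.sqrt_pos.2 (by nlinarith)
  have hs1 : √(1 - r ^ 2) < 1 := by nlinarith
  rw [ellipticE]
  generalize √(1 - r ^ 2) = s at *
  set l : ℝ := (1 - s) / (1 + s) with hl
  have hl0 : 0 < l := div_pos (by linarith) (by linarith)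
  have hl1 : l < 1 := (div_lt_one (by linarith)).2 (by linarith)
  set f : ℝ → ℝ := fun φ => √(1 + l ^ 2 + 2 * l * cos φ) with hf
  have hfc : Continuous f := by fun_prop
  have hmain := circle_integral_norm_lower_bound l hl0 hl1
  simp only [norm_one_add_circleMap] at hmain
  change _ < ∫ φ in (0 : ℝ)..(2 * π), f φ at hmain
  have hpt : ∀ θ, √(1 - r ^ 2 * sin θ ^ 2) = (1 + s) / 2 * f (2 * θ) := by
    intro θ
    have hp : (0 : ℝ) ≤ (1 + s) / 2 := by linarith
    rw [hf]
    dsimp only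
    rw [← Real.sqrt_sq hp, ← Real.sqrt_mul (sq_nonneg _)]
    congr 1
    have hr2 : r ^ 2 = 1 - s ^ 2 := by linarith
    rw [hr2, Real.cos_two_mul, Real.cos_sq', hl]
    field_simp
    ring
  have hsymm : ∫ φ in π..(2 * π), f φ = ∫ φ in (0 : ℝ)..π, f φ := by
    have h := intervalIntegral.integral_comp_sub_left (a := 0) (b := π) f (2 * π)
    rw [sub_zero, show 2 * π - π = π by ring] at h
    rw [← h]
    simp [hf, Real.cos_two_pi_sub]
  have hsplit := intervalIntegral.integral_add_adjacent_intervals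
    (hfc.intervalIntegrable (μ := MeasureTheory.volume) 0 π) (hfc.intervalIntegrable π (2 * π))
  rw [hsymm] at hsplit
  have hE : ∫ θ in (0 : ℝ)..(π / 2), √(1 - r ^ 2 * sin θ ^ 2)
      = (1 + s) / 8 * ∫ φ in (0 : ℝ)..(2 * π), f φ := by
    simp only [hpt]
    rw [intervalIntegral.integral_const_mul,
      intervalIntegral.integral_comp_mul_left f two_ne_zero, mul_zero,
      show 2 * (π / 2) = π by ring, smul_eq_mul, ← hsplit]
    ring
  rw [hE]
  calc _ = (1 + s) / 8 * (2 * π * (1 + l ^ 2 / 4)) := by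
        rw [hl]
        field_simp
        ring
    _ < _ := mul_lt_mul_of_pos_left hmain (by linarith)
end

section
/- For all r ∈ (0,1), writing r' = √(1−r²), one has the upper bound E(r) < π·[(r' + (2/π)(1−r')²)/(1+r')]. -/
/-!
Write `x = √(1 - r²)`. For `c > 0`, AM-GM gives `√u ≤ (u + c²) / (2c)`. With `c = (1 + x) / 2` and
`u = 1 - r² sin² θ`, integrating over `[0, π/2]` (where `sin²` has mean `1/2`) yields
`E(r) ≤ (π x + (3π/8) (1 - x)²) / (1 + x)`. The claim follows from `3π/8 < 2` and `x < 1`.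
-/

open Real

/-- The integrated AM-GM bound; the parameter `c` is free. -/
lemma ellipticE_le (r c : ℝ) (hc : 0 < c) (hr : r ^ 2 ≤ 1) :
    ellipticE r ≤ π / 2 * ((1 - r ^ 2 / 2 + c ^ 2) / (2 * c)) := by
  have hint : ∫ θ in (0 : ℝ)..(π / 2), ((1 + c ^ 2) / (2 * c) - r ^ 2 / (2 * c) * sin θ ^ 2)
      = π / 2 * ((1 - r ^ 2 / 2 + c ^ 2) / (2 * c)) := by
    rw [intervalIntegral.integral_sub (Continuous.intervalIntegrable (by fun_prop) _ _)
      (Continuous.intervalIntegrable (by fun_prop) _ _), intervalIntegral.integral_const_mul,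
      integral_sin_sq, intervalIntegral.integral_const]
    simp only [sin_zero, cos_pi_div_two, smul_eq_mul]
    field_simp
    ring
  rw [← hint, ellipticE]
  refine intervalIntegral.integral_mono_on (by positivity)
    (Continuous.intervalIntegrable (by fun_prop) _ _)
    (Continuous.intervalIntegrable (by fun_prop) _ _) fun θ _ => ?_
  have hu : 0 ≤ 1 - r ^ 2 * sin θ ^ 2 := by
    nlinarith [sin_sq_le_one θ, sq_nonneg (sin θ), sq_nonneg r]
  have hs := Real.sq_sqrt hu
  set s := Real.sqrt (1 - r ^ 2 * sin θ ^ 2)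
  have heq : (1 + c ^ 2) / (2 * c) - r ^ 2 / (2 * c) * sin θ ^ 2 = (s ^ 2 + c ^ 2) / (2 * c) := by
    rw [hs]
    field_simp
    ring
  rw [heq, le_div_iff₀ (by positivity)]
  nlinarith [sq_nonneg (s - c)]

theorem stmt6 (r : ℝ) (hr : r ∈ Set.Ioo (0 : ℝ) 1) :
    ellipticE r < π * ((Real.sqrt (1 - r ^ 2) + 2 / π * (1 - Real.sqrt (1 - r ^ 2)) ^ 2) /
      (1 + Real.sqrt (1 - r ^ 2))) := by
  obtain ⟨h0, h1⟩ := hr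
  have hr2 : r ^ 2 ≤ 1 := by nlinarith
  have hx0 := Real.sqrt_nonneg (1 - r ^ 2)
  have hx2 := Real.sq_sqrt (sub_nonneg.2 hr2)
  set x := Real.sqrt (1 - r ^ 2)
  have hx1 : x < 1 := by nlinarith [pow_pos h0 2]
  have hpi := Real.pi_pos
  refine (ellipticE_le r ((1 + x) / 2) (by positivity) hr2).trans_lt ?_
  have hl : π / 2 * ((1 - r ^ 2 / 2 + ((1 + x) / 2) ^ 2) / (2 * ((1 + x) / 2)))
      = (π * x + 3 * π / 8 * (1 - x) ^ 2) / (1 + x) := by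
    have : r ^ 2 = 1 - x ^ 2 := by linarith
    rw [this]
    field_simp
    ring
  have hrr : π * ((x + 2 / π * (1 - x) ^ 2) / (1 + x))
      = (π * x + 2 * (1 - x) ^ 2) / (1 + x) := by
    field_simp
  rw [hl, hrr]
  have h3 : 3 * π / 8 < 2 := by linarith [Real.pi_lt_four]
  have h4 : 0 < (1 - x) ^ 2 := pow_pos (by linarith) 2
  gcongr
end

section
/- For all x ∈ (0,1), one has (17 + 30x + 17x²)/(8(1+x)) − 3(1+x)/2 > (1/2)·√((1+x²)/2) + (1+x)/4. (Hence the lower bound (π/2)·[(17+30r'+17r'²)/(8(1+r')) − 3(1+r')/2] for E(r) is sharper than the lower bound (π/2)·[(1/2)√((1+r'²)/2) + (1+r')/4].) -/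
open Real

theorem stmt7 (x : ℝ) (hx : x ∈ Set.Ioo (0 : ℝ) 1) :
    (17 + 30 * x + 17 * x ^ 2) / (8 * (1 + x)) - 3 * (1 + x) / 2
      > 1 / 2 * Real.sqrt ((1 + x ^ 2) / 2) + (1 + x) / 4 := by
  obtain ⟨h0, h1⟩ := hx
  have hpos : 0 < 1 + x := by linarith
  -- This is AM-GM for `(1 + x ^ 2) / (1 + x)` and `(1 + x) / 2`; after squaring and clearing
  -- denominators the gap is exactly `(1 - x) ^ 4`.
  have key : Real.sqrt ((1 + x ^ 2) / 2) < (3 + 2 * x + 3 * x ^ 2) / (4 * (1 + x)) := by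
    rw [Real.sqrt_lt' (by positivity), div_pow, div_lt_div_iff₀ (by norm_num) (by positivity)]
    have h4 : 0 < (1 - x) ^ 4 := pow_pos (by linarith) 4
    nlinarith [h4]
  have hsplit : (17 + 30 * x + 17 * x ^ 2) / (8 * (1 + x)) - 3 * (1 + x) / 2
      = 1 / 2 * ((3 + 2 * x + 3 * x ^ 2) / (4 * (1 + x))) + (1 + x) / 4 := by
    field_simp
    ring
  rw [hsplit]
  linarith
end

section
/- For all x ∈ (0,1), one has (17 + 30x + 17x²)/(8(1+x)) − 3(1+x)/2 > √(6 + 2x − 3(1−x²))/(2√2). (Hence the lower bound (π/2)·[(17+30r'+17r'²)/(8(1+r')) − 3(1+r')/2] for E(r) is sharper than the lower bound (π/2)·√(6 + 2r' − 3r²)/(2√2).) -/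
open Real

/-! The left side equals `(5 + 6x + 5x²) / (8(1 + x))`, and the right side is the square root of
`(3 + 2x + 3x²) / 8`. After squaring and clearing denominators the difference is a perfect power:
`(5 + 6x + 5x²)² - 8 (1 + x)² (3 + 2x + 3x²) = (1 - x)⁴ > 0`. -/

theorem stmt8 (x : ℝ) (hx : x ∈ Set.Ioo (0 : ℝ) 1) :
    (17 + 30 * x + 17 * x ^ 2) / (8 * (1 + x)) - 3 * (1 + x) / 2
      > Real.sqrt (6 + 2 * x - 3 * (1 - x ^ 2)) / (2 * Real.sqrt 2) := by
  obtain ⟨h0, h1⟩ := hx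
  have hpos : 0 < 1 + x := by linarith
  have hL : (17 + 30 * x + 17 * x ^ 2) / (8 * (1 + x)) - 3 * (1 + x) / 2
      = (5 + 6 * x + 5 * x ^ 2) / (8 * (1 + x)) := by
    field_simp
    ring
  have hLpos : 0 < (5 + 6 * x + 5 * x ^ 2) / (8 * (1 + x)) := by positivity
  have hR : 0 ≤ 6 + 2 * x - 3 * (1 - x ^ 2) := by nlinarith
  rw [hL, gt_iff_lt]
  refine lt_of_pow_lt_pow_left₀ 2 hLpos.le ?_
  rw [div_pow, mul_pow, Real.sq_sqrt hR, Real.sq_sqrt zero_le_two, div_pow,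
    div_lt_div_iff₀ (by norm_num) (by positivity)]
  have h4 : 0 < (1 - x) ^ 4 := pow_pos (by linarith) 4
  nlinarith only [h4]
end

section
/- The function r ↦ (E(r) − (1−r²)K(r))/r² is strictly increasing on (0,1), and it maps (0,1) onto the interval (π/4, 1); in particular its limit as r → 0⁺ is π/4 and its limit as r → 1⁻ is 1. -/
/-!
For `0 < r < 1` the numerator collapses under the integral sign, because
`(1 - r² sin² θ) - (1 - r²) = r² cos² θ`; hence the function in question equals
`∫₀^{π/2} cos² θ / √(1 - r² sin² θ) dθ` (`quotient_eq_legendreB`). This integral makes sense on the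
closed interval `[0, 1]`: for `0 < θ < π/2` its integrand is strictly increasing in `r` and bounded
by `cos θ`, so the integral is strictly increasing (`legendreB_strictMonoOn`) and, by dominated
convergence, continuous (`legendreB_continuousOn`). Its end values are `∫ cos² = π/4` and
`∫ cos = 1`, and the intermediate value theorem gives the image.
-/

open Real

/-- The integrand `cos² θ / √(1 - r² sin² θ)`. At `r = 1`, `θ = π / 2` the convention `0⁻¹ = 0`
gives the value `0`, which is the continuous one. -/
noncomputable def legendreBIntegrand (r θ : ℝ) : ℝ :=
  cos θ ^ 2 * (Real.sqrt (1 - r ^ 2 * sin θ ^ 2))⁻¹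

/-- Legendre's integral `B(r) = ∫₀^{π/2} cos² θ / √(1 - r² sin² θ) dθ`. -/
noncomputable def legendreB (r : ℝ) : ℝ :=
  ∫ θ in (0 : ℝ)..(π / 2), legendreBIntegrand r θ

lemma one_sub_pos_of_lt_one {r : ℝ} (hr : r ∈ Set.Ico (0 : ℝ) 1) (θ : ℝ) :
    0 < 1 - r ^ 2 * sin θ ^ 2 := by
  have h1 : r ^ 2 < 1 := by nlinarith [hr.1, hr.2]
  nlinarith [sin_sq_le_one θ, sq_nonneg (sin θ), sq_nonneg r]

lemma cos_sq_le_one_sub {r : ℝ} (hr : r ∈ Set.Icc (0 : ℝ) 1) (θ : ℝ) :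
    cos θ ^ 2 ≤ 1 - r ^ 2 * sin θ ^ 2 := by
  have h1 : r ^ 2 ≤ 1 := by nlinarith [hr.1, hr.2]
  nlinarith [sin_sq_add_cos_sq θ, sq_nonneg (sin θ)]

lemma cos_pos_of_mem {θ : ℝ} (hθ : θ ∈ Set.Ico (0 : ℝ) (π / 2)) : 0 < cos θ :=
  cos_pos_of_mem_Ioo ⟨by linarith [hθ.1, pi_pos], hθ.2⟩

lemma legendreBIntegrand_one {θ : ℝ} (hθ : θ ∈ Set.Icc (0 : ℝ) (π / 2)) :
    legendreBIntegrand 1 θ = cos θ := by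
  have hc : 0 ≤ cos θ := cos_nonneg_of_mem_Icc ⟨by linarith [hθ.1, pi_pos], hθ.2⟩
  have h : 1 - (1 : ℝ) ^ 2 * sin θ ^ 2 = cos θ ^ 2 := by
    linarith [sin_sq_add_cos_sq θ]
  rw [legendreBIntegrand, h, sqrt_sq hc]
  rcases hc.eq_or_lt with h0 | h0
  · simp [← h0]
  · field_simp

lemma legendreBIntegrand_continuousOn {r : ℝ} (hr : r ∈ Set.Icc (0 : ℝ) 1) :
    ContinuousOn (legendreBIntegrand r) (Set.Icc 0 (π / 2)) := by
  rcases hr.2.eq_or_lt with h1 | h1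
  · subst h1
    exact continuous_cos.continuousOn.congr fun θ hθ => legendreBIntegrand_one hθ
  · have hne : ∀ θ, Real.sqrt (1 - r ^ 2 * sin θ ^ 2) ≠ 0 := fun θ =>
      (sqrt_pos.2 (one_sub_pos_of_lt_one ⟨hr.1, h1⟩ θ)).ne'
    unfold legendreBIntegrand
    exact ((continuous_cos.pow 2).mul
      (Continuous.inv₀ (by fun_prop) hne)).continuousOn

lemma legendreBIntegrand_le {a b θ : ℝ} (ha : 0 ≤ a) (hab : a ≤ b) (hb : b ≤ 1) :
    legendreBIntegrand a θ ≤ legendreBIntegrand b θ := by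
  rcases eq_or_ne (cos θ) 0 with h | h
  · simp [legendreBIntegrand, h]
  · have hpos : 0 < 1 - b ^ 2 * sin θ ^ 2 :=
      (by positivity : 0 < cos θ ^ 2).trans_le (cos_sq_le_one_sub ⟨ha.trans hab, hb⟩ θ)
    have := sqrt_pos.2 hpos
    unfold legendreBIntegrand
    gcongr

lemma legendreBIntegrand_lt {a b : ℝ} (ha : 0 ≤ a) (hab : a < b) (hb : b ≤ 1) :
    legendreBIntegrand a (π / 4) < legendreBIntegrand b (π / 4) := by
  have hs : 0 < sin (π / 4) := by rw [sin_pi_div_four]; positivity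
  have hc : 0 < cos (π / 4) := by rw [cos_pi_div_four]; positivity
  have hpos : 0 < 1 - b ^ 2 * sin (π / 4) ^ 2 :=
    (by positivity : 0 < cos (π / 4) ^ 2).trans_le
      (cos_sq_le_one_sub ⟨ha.trans hab.le, hb⟩ _)
  have := sqrt_pos.2 hpos
  unfold legendreBIntegrand
  gcongr

lemma legendreB_strictMonoOn : StrictMonoOn legendreB (Set.Icc 0 1) := by
  intro a ha b hb hab
  refine intervalIntegral.integral_lt_integral_of_continuousOn_of_le_of_exists_lt
    (by positivity) (legendreBIntegrand_continuousOn ha) (legendreBIntegrand_continuousOn hb)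
    (fun θ _ => legendreBIntegrand_le ha.1 hab.le hb.2)
    ⟨π / 4, ⟨by positivity, by linarith [pi_pos]⟩, legendreBIntegrand_lt ha.1 hab hb.2⟩

lemma legendreB_continuousOn : ContinuousOn legendreB (Set.Icc 0 1) := by
  intro r hr
  have hsub : ∀ θ ∈ Set.uIoc (0 : ℝ) (π / 2), θ ∈ Set.Icc (0 : ℝ) (π / 2) := by
    intro θ hθ
    rw [Set.uIoc_of_le (by positivity)] at hθ
    exact ⟨hθ.1.le, hθ.2⟩
  refine intervalIntegral.continuousWithinAt_of_dominated_interval (bound := fun _ => 1) ?_ ?_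
    intervalIntegrable_const ?_
  · filter_upwards [self_mem_nhdsWithin] with x hx
    rw [Set.uIoc_of_le (by positivity)]
    exact ((legendreBIntegrand_continuousOn hx).mono Set.Ioc_subset_Icc_self).aestronglyMeasurable
      measurableSet_Ioc
  · filter_upwards [self_mem_nhdsWithin] with x hx
    refine Filter.Eventually.of_forall fun θ hθ => ?_
    have h0 : 0 ≤ legendreBIntegrand x θ := by unfold legendreBIntegrand; positivity
    rw [norm_of_nonneg h0]
    exact (legendreBIntegrand_le hx.1 hx.2 le_rfl).trans
      ((legendreBIntegrand_one (hsub θ hθ)).trans_le (cos_le_one θ))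
  -- Dropping the null set `θ = π / 2` keeps the radicand positive even at `r = 1`.
  · filter_upwards [MeasureTheory.Measure.ae_ne MeasureTheory.volume (π / 2)] with θ hne hθ
    have hθ' := hsub θ hθ
    have hc := cos_pos_of_mem ⟨hθ'.1, lt_of_le_of_ne hθ'.2 hne⟩
    have hpos : 0 < 1 - r ^ 2 * sin θ ^ 2 :=
      (by positivity : 0 < cos θ ^ 2).trans_le (cos_sq_le_one_sub hr θ)
    unfold legendreBIntegrand
    refine ContinuousAt.continuousWithinAt (ContinuousAt.mul (by fun_prop)
      (ContinuousAt.inv₀ (by fun_prop) (sqrt_pos.2 hpos).ne'))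

lemma legendreB_zero : legendreB 0 = π / 4 := by
  simp [legendreB, legendreBIntegrand, integral_cos_sq]
  ring

lemma legendreB_one : legendreB 1 = 1 := by
  have : legendreB 1 = ∫ θ in (0 : ℝ)..(π / 2), cos θ := by
    refine intervalIntegral.integral_congr fun θ hθ => ?_
    rw [Set.uIcc_of_le (by positivity)] at hθ
    exact legendreBIntegrand_one hθ
  rw [this]
  simp

lemma quotient_eq_legendreB {r : ℝ} (hr : r ∈ Set.Ioo (0 : ℝ) 1) :
    (ellipticE r - (1 - r ^ 2) * ellipticK r) / r ^ 2 = legendreB r := by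
  have hpos := one_sub_pos_of_lt_one (Set.Ioo_subset_Ico_self hr)
  have hne : ∀ θ, Real.sqrt (1 - r ^ 2 * sin θ ^ 2) ≠ 0 := fun θ => (sqrt_pos.2 (hpos θ)).ne'
  have hr0 : r ≠ 0 := hr.1.ne'
  have hE : Continuous fun θ => Real.sqrt (1 - r ^ 2 * sin θ ^ 2) := by fun_prop
  have hK : Continuous fun θ => (Real.sqrt (1 - r ^ 2 * sin θ ^ 2))⁻¹ := hE.inv₀ hne
  rw [div_eq_iff (by positivity), mul_comm (legendreB r), ellipticE, ellipticK, legendreB,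
    ← intervalIntegral.integral_const_mul, ← intervalIntegral.integral_const_mul,
    ← intervalIntegral.integral_sub (hE.intervalIntegrable _ _)
      ((hK.const_mul _).intervalIntegrable _ _)]
  refine intervalIntegral.integral_congr fun θ _ => ?_
  have hs := sq_sqrt (hpos θ).le
  have hc := sin_sq_add_cos_sq θ
  have h0 := hne θ
  simp only [legendreBIntegrand]
  field_simp
  rw [hs]
  linear_combination -r ^ 2 * hc

theorem stmt9 :
    StrictMonoOn (fun r : ℝ => (ellipticE r - (1 - r ^ 2) * ellipticK r) / r ^ 2)
      (Set.Ioo (0 : ℝ) 1) ∧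
    (fun r : ℝ => (ellipticE r - (1 - r ^ 2) * ellipticK r) / r ^ 2) '' Set.Ioo (0 : ℝ) 1
      = Set.Ioo (π / 4) 1 ∧
    Filter.Tendsto (fun r : ℝ => (ellipticE r - (1 - r ^ 2) * ellipticK r) / r ^ 2)
      (nhdsWithin 0 (Set.Ioi 0)) (nhds (π / 4)) ∧
    Filter.Tendsto (fun r : ℝ => (ellipticE r - (1 - r ^ 2) * ellipticK r) / r ^ 2)
      (nhdsWithin 1 (Set.Iio 1)) (nhds 1) := by
  have heq : Set.EqOn legendreB
      (fun r : ℝ => (ellipticE r - (1 - r ^ 2) * ellipticK r) / r ^ 2) (Set.Ioo 0 1) :=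
    fun r hr => (quotient_eq_legendreB hr).symm
  have h0 : (0 : ℝ) ∈ Set.Icc (0 : ℝ) 1 := by simp
  have h1 : (1 : ℝ) ∈ Set.Icc (0 : ℝ) 1 := by simp
  refine ⟨(legendreB_strictMonoOn.mono Set.Ioo_subset_Icc_self).congr heq, ?_, ?_, ?_⟩
  · rw [← heq.image_eq, ← legendreB_zero]
    nth_rewrite 2 [← legendreB_one]
    refine Set.Subset.antisymm ?_ (intermediate_value_Ioo zero_le_one legendreB_continuousOn)
    rintro _ ⟨r, hr, rfl⟩
    have hr' := Set.Ioo_subset_Icc_self hr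
    exact ⟨legendreB_strictMonoOn h0 hr' hr.1, legendreB_strictMonoOn hr' h1 hr.2⟩
  · rw [← legendreB_zero, ← nhdsWithin_Ioo_eq_nhdsGT (zero_lt_one' ℝ)]
    exact ((legendreB_continuousOn 0 h0).mono Set.Ioo_subset_Icc_self).tendsto.congr'
      (heq.eventuallyEq_of_mem self_mem_nhdsWithin)
  · rw [← nhdsWithin_Ioo_eq_nhdsLT (zero_lt_one' ℝ)]
    have := ((legendreB_continuousOn 1 h1).mono Set.Ioo_subset_Icc_self).tendsto.congr'
      (heq.eventuallyEq_of_mem self_mem_nhdsWithin)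
    rwa [legendreB_one] at this
end

section
/- The function r ↦ 2E(r) − (1−r²)K(r) is strictly increasing on (0,1), and it maps (0,1) onto the interval (π/2, 2); in particular its limit as r → 0⁺ is π/2 and its limit as r → 1⁻ is 2. -/
/-!
Write `Δ = √(1 - r² sin² θ)` and `f r = 2 E(r) - (1 - r²) K(r)`. The integrand of `f` is not monotone
in `r` pointwise, but for `0 ≤ r < 1` it differs from `1 + r² cos² θ / (1 + Δ)` by the derivative in
`θ` of `r² sin θ cos θ / (1 + Δ)`, which vanishes at `0` and `π / 2`. Hence (`two_E_sub_K_eq`)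

  `f r = π / 2 + ∫₀^{π/2} r² cos² θ / (1 + Δ) dθ`.

The right-hand side (`regularForm`) is continuous in `r` up to and including `r = 1`, its integrand is
increasing in `r`, and its values at `0` and `1` are `π / 2` and `2`. Strict monotonicity, both
limits and (by the intermediate value theorem) the range follow.
-/

open Real

/-- The continuous extension to `r = 1` of `2 E(r) - (1 - r²) K(r)`, as the integral of a function
monotone in `r`. -/
noncomputable def regularForm (r : ℝ) : ℝ :=
  π / 2 + ∫ θ in (0 : ℝ)..(π / 2), r ^ 2 * cos θ ^ 2 / (1 + √(1 - r ^ 2 * sin θ ^ 2))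

lemma one_add_sqrt_ne_zero (x : ℝ) : 1 + √x ≠ 0 := by positivity

lemma one_sub_pos {r : ℝ} (h0 : 0 ≤ r) (h1 : r < 1) (θ : ℝ) : 0 < 1 - r ^ 2 * sin θ ^ 2 := by
  nlinarith [sin_sq_le_one θ, sq_nonneg (sin θ), sq_nonneg r]

/-- The derivative of `r² sin θ cos θ / (1 + Δ)` is the difference of the two integrands. -/
lemma hasDerivAt_boundary_term {r : ℝ} (h0 : 0 ≤ r) (h1 : r < 1) (θ : ℝ) :
    HasDerivAt (fun t => r ^ 2 * (sin t * cos t) / (1 + √(1 - r ^ 2 * sin t ^ 2)))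
      (2 * √(1 - r ^ 2 * sin θ ^ 2) - (1 - r ^ 2) * (√(1 - r ^ 2 * sin θ ^ 2))⁻¹
        - (1 + r ^ 2 * cos θ ^ 2 / (1 + √(1 - r ^ 2 * sin θ ^ 2)))) θ := by
  have hpos := one_sub_pos h0 h1 θ
  have hin : HasDerivAt (fun t => 1 - r ^ 2 * sin t ^ 2) (-(r ^ 2 * (2 * sin θ * cos θ))) θ := by
    have := (((hasDerivAt_sin θ).pow 2).const_mul (r ^ 2)).const_sub 1
    simpa using this
  have hden := (hin.sqrt hpos.ne').const_add 1
  have hnum := ((hasDerivAt_sin θ).mul (hasDerivAt_cos θ)).const_mul (r ^ 2)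
  have hne := one_add_sqrt_ne_zero (1 - r ^ 2 * sin θ ^ 2)
  refine (hnum.div hden hne).congr_deriv ?_
  have hd := Real.sq_sqrt hpos.le
  have hd0 : √(1 - r ^ 2 * sin θ ^ 2) ≠ 0 := (Real.sqrt_pos.2 hpos).ne'
  have hc := cos_sq' θ
  simp only [Pi.mul_apply]
  generalize √(1 - r ^ 2 * sin θ ^ 2) = d at *
  generalize sin θ = s at *
  generalize cos θ = c at *
  clear hin hden hnum
  field_simp
  grind

lemma two_E_sub_K_eq {r : ℝ} (h0 : 0 ≤ r) (h1 : r < 1) :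
    2 * ellipticE r - (1 - r ^ 2) * ellipticK r = regularForm r := by
  have hd : ∀ θ : ℝ, √(1 - r ^ 2 * sin θ ^ 2) ≠ 0 := fun θ =>
    (Real.sqrt_pos.2 (one_sub_pos h0 h1 θ)).ne'
  have hn : ∀ θ : ℝ, 1 + √(1 - r ^ 2 * sin θ ^ 2) ≠ 0 := fun θ => one_add_sqrt_ne_zero _
  have cE : Continuous fun θ : ℝ => √(1 - r ^ 2 * sin θ ^ 2) := by fun_prop
  have cK : Continuous fun θ : ℝ => (√(1 - r ^ 2 * sin θ ^ 2))⁻¹ := cE.inv₀ hd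
  have cG : Continuous fun θ : ℝ => r ^ 2 * cos θ ^ 2 / (1 + √(1 - r ^ 2 * sin θ ^ 2)) :=
    Continuous.div (by fun_prop) (by fun_prop) hn
  have cEK : Continuous fun θ : ℝ => 2 * √(1 - r ^ 2 * sin θ ^ 2)
      - (1 - r ^ 2) * (√(1 - r ^ 2 * sin θ ^ 2))⁻¹ :=
    (cE.const_mul 2).sub (cK.const_mul (1 - r ^ 2))
  have cG1 : Continuous fun θ : ℝ =>
      1 + r ^ 2 * cos θ ^ 2 / (1 + √(1 - r ^ 2 * sin θ ^ 2)) := continuous_const.add cG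
  have hint := intervalIntegral.integral_eq_sub_of_hasDerivAt (a := 0) (b := π / 2)
    (fun θ _ => hasDerivAt_boundary_term h0 h1 θ) ((cEK.sub cG1).intervalIntegrable _ _)
  rw [intervalIntegral.integral_sub (cEK.intervalIntegrable _ _) (cG1.intervalIntegrable _ _),
    intervalIntegral.integral_sub ((cE.const_mul 2).intervalIntegrable _ _)
      ((cK.const_mul (1 - r ^ 2)).intervalIntegrable _ _),
    intervalIntegral.integral_add (continuous_const.intervalIntegrable _ _)
      (cG.intervalIntegrable _ _),
    intervalIntegral.integral_const_mul, intervalIntegral.integral_const_mul] at hint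
  simp only [intervalIntegral.integral_const, cos_pi_div_two, sin_zero, mul_zero, zero_mul,
    zero_div, sub_zero, smul_eq_mul, mul_one] at hint
  unfold ellipticE ellipticK regularForm
  linarith

lemma continuous_regularForm : Continuous regularForm := by
  refine continuous_const.add
    (intervalIntegral.continuous_parametric_intervalIntegral_of_continuous' ?_ _ _)
  exact Continuous.div (by fun_prop) (by fun_prop) fun p => one_add_sqrt_ne_zero _

lemma regularForm_zero : regularForm 0 = π / 2 := by
  simp [regularForm]

lemma regularForm_one : regularForm 1 = 2 := by
  have hpi := pi_pos
  have hnn : ∀ θ ∈ Set.uIcc 0 (π / 2), 0 ≤ cos θ := fun θ hθ => by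
    rw [Set.uIcc_of_le (by positivity)] at hθ
    exact cos_nonneg_of_neg_pi_div_two_le_of_le (by linarith [hθ.1]) hθ.2
  have hcongr : ∫ θ in (0 : ℝ)..(π / 2), (1 : ℝ) ^ 2 * cos θ ^ 2 / (1 + √(1 - 1 ^ 2 * sin θ ^ 2))
      = ∫ θ in (0 : ℝ)..(π / 2), cos θ ^ 2 / (1 + cos θ) := by
    refine intervalIntegral.integral_congr fun θ hθ => ?_
    have hs : √(1 - 1 ^ 2 * sin θ ^ 2) = cos θ := by
      rw [one_pow, one_mul, ← cos_sq', Real.sqrt_sq (hnn θ hθ)]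
    simp only [hs]
    rw [one_pow, one_mul]
  have hderiv : ∀ θ ∈ Set.uIcc 0 (π / 2),
      HasDerivAt (fun t => sin t - t + sin t / (1 + cos t)) (cos θ ^ 2 / (1 + cos θ)) θ := by
    intro θ hθ
    have hne : 1 + cos θ ≠ 0 := by linarith [hnn θ hθ]
    refine (((hasDerivAt_sin θ).sub (hasDerivAt_id θ)).add
      ((hasDerivAt_sin θ).div ((hasDerivAt_cos θ).const_add 1) hne)).congr_deriv ?_
    have hc := sin_sq θ
    field_simp
    grind
  have hint : IntervalIntegrable (fun θ => cos θ ^ 2 / (1 + cos θ)) MeasureTheory.volume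
      0 (π / 2) := by
    refine ContinuousOn.intervalIntegrable (ContinuousOn.div (by fun_prop) (by fun_prop) ?_)
    intro θ hθ
    linarith [hnn θ hθ]
  rw [regularForm, hcongr, intervalIntegral.integral_eq_sub_of_hasDerivAt hderiv hint]
  simp
  ring

lemma strictMonoOn_regularForm : StrictMonoOn regularForm (Set.Icc 0 1) := by
  intro a ha b hb hab
  have hpi := pi_pos
  have hcont : ∀ r : ℝ, Continuous fun θ : ℝ =>
      r ^ 2 * cos θ ^ 2 / (1 + √(1 - r ^ 2 * sin θ ^ 2)) := fun r =>
    Continuous.div (by fun_prop) (by fun_prop) fun θ => one_add_sqrt_ne_zero _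
  have hsq : a ^ 2 < b ^ 2 := pow_lt_pow_left₀ hab ha.1 two_ne_zero
  unfold regularForm
  refine add_lt_add_right (intervalIntegral.integral_lt_integral_of_continuousOn_of_le_of_exists_lt
    (by positivity) (hcont a).continuousOn (hcont b).continuousOn (fun θ _ => ?_)
    ⟨0, ⟨le_rfl, by positivity⟩, ?_⟩) _
  · gcongr
  · simp only [cos_zero, sin_zero]
    norm_num
    linarith

theorem stmt10 :
    StrictMonoOn (fun r : ℝ => 2 * ellipticE r - (1 - r ^ 2) * ellipticK r)
      (Set.Ioo (0 : ℝ) 1) ∧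
    (fun r : ℝ => 2 * ellipticE r - (1 - r ^ 2) * ellipticK r) '' Set.Ioo (0 : ℝ) 1
      = Set.Ioo (π / 2) 2 ∧
    Filter.Tendsto (fun r : ℝ => 2 * ellipticE r - (1 - r ^ 2) * ellipticK r)
      (nhdsWithin 0 (Set.Ioi 0)) (nhds (π / 2)) ∧
    Filter.Tendsto (fun r : ℝ => 2 * ellipticE r - (1 - r ^ 2) * ellipticK r)
      (nhdsWithin 1 (Set.Iio 1)) (nhds 2) := by
  have heq : Set.EqOn regularForm (fun r : ℝ => 2 * ellipticE r - (1 - r ^ 2) * ellipticK r)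
      (Set.Ioo 0 1) := fun r hr => (two_E_sub_K_eq hr.1.le hr.2).symm
  have hmono := strictMonoOn_regularForm
  refine ⟨(hmono.mono Set.Ioo_subset_Icc_self).congr heq, ?_, ?_, ?_⟩
  · rw [← heq.image_eq, ← regularForm_zero, ← regularForm_one]
    refine Set.Subset.antisymm ?_
      (intermediate_value_Ioo zero_le_one continuous_regularForm.continuousOn)
    rintro _ ⟨r, hr, rfl⟩
    have hr' := Set.Ioo_subset_Icc_self hr
    exact ⟨hmono (by simp) hr' hr.1, hmono hr' (by simp) hr.2⟩
  · rw [← regularForm_zero]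
    refine (continuous_regularForm.continuousWithinAt.tendsto).congr' ?_
    filter_upwards [Ioo_mem_nhdsGT (zero_lt_one' ℝ)] with r hr using heq hr
  · refine (regularForm_one ▸ continuous_regularForm.continuousWithinAt.tendsto :
      Filter.Tendsto regularForm (nhdsWithin 1 (Set.Iio 1)) (nhds 2)).congr' ?_
    filter_upwards [Ioo_mem_nhdsLT (zero_lt_one' ℝ)] with r hr using heq hr
end

section
/- Let a, b > 0 with a ≠ b, and define J(x) = C(xa+(1−x)b, xb+(1−x)a) for x ∈ [1/2, 1]. Then J is continuous and strictly increasing on [1/2, 1], with J(1/2) = A(a,b) and J(1) = C(a,b). -/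
/-!
Along the segment the arguments of the mean have constant sum `a + b`, so
`J(x) = (a + b) / 2 + (2x - 1)² (a - b)² / (2 (a + b))` (`contraMean_segment`). This is a quadratic
polynomial in `x` with vertex at `1/2` and, since `a ≠ b`, positive leading coefficient; all the
claims can be read off from it.
-/

open Real

/-- With `d = 2x - 1`, the two arguments of the mean are `(a + b ± d (a - b)) / 2`: their sum does
not depend on `x`, and the sum of their squares is `((a + b)² + d² (a - b)²) / 2`. -/
lemma contraMean_segment {a b : ℝ} (h : a + b ≠ 0) (x : ℝ) :
    contraMean (x * a + (1 - x) * b) (x * b + (1 - x) * a)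
      = (a + b) / 2 + (2 * x - 1) ^ 2 * ((a - b) ^ 2 / (2 * (a + b))) := by
  have hs : x * a + (1 - x) * b + (x * b + (1 - x) * a) = a + b := by ring
  rw [contraMean, hs]
  field_simp
  ring

theorem stmt12 (a b : ℝ) (ha : 0 < a) (hb : 0 < b) (hab : a ≠ b) :
    ContinuousOn (fun x : ℝ => contraMean (x * a + (1 - x) * b) (x * b + (1 - x) * a))
      (Set.Icc (1 / 2 : ℝ) 1) ∧
    StrictMonoOn (fun x : ℝ => contraMean (x * a + (1 - x) * b) (x * b + (1 - x) * a))
      (Set.Icc (1 / 2 : ℝ) 1) ∧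
    contraMean ((1 / 2 : ℝ) * a + (1 - 1 / 2) * b) ((1 / 2 : ℝ) * b + (1 - 1 / 2) * a)
      = arithMean a b ∧
    contraMean ((1 : ℝ) * a + (1 - 1) * b) ((1 : ℝ) * b + (1 - 1) * a) = contraMean a b := by
  have hs : a + b ≠ 0 := by positivity
  have hd : 0 < (a - b) ^ 2 := by
    have := sub_ne_zero.mpr hab
    positivity
  have hk : 0 < (a - b) ^ 2 / (2 * (a + b)) := by positivity
  simp only [contraMean_segment hs]
  refine ⟨by fun_prop, ?_, ?_, ?_⟩
  · intro x hx y _ hxy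
    have h1 : 0 ≤ 2 * x - 1 := by linarith [hx.1]
    have h2 : 2 * x - 1 < 2 * y - 1 := by linarith
    dsimp only
    gcongr
  · rw [arithMean]
    ring
  · rw [contraMean]
    field_simp
    ring
end
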